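/- arXiv:1910.07362 — 2 statements merged into one kernel-verified Lean document; each statement's English description precedes it below -/
import Mathlib

section
/- Let X and Y be Banach spaces such that X admits a bump function which is bounded, Lipschitz and everywhere Gâteaux differentiable, and Y admits a bump function which is bounded, Lipschitz and everywhere Fréchet differentiable. Let C_b^G(X) be the set of bounded Lipschitz everywhere Gâteaux differentiable functions X → ℝ and C_b^F(Y) the set of bounded Lipschitz everywhere Fréchet differentiable functions Y → ℝ. Then the following are equivalent: (1) there exists a linear bijection Φ : C_b^G(X) → C_b^F(Y) such that sup_y |Φ(f)(y)| = sup_x |f(x)| and the best Lipschitz constant of Φ(f) equals the best Lipschitz constant of f, for all f ∈ C_b^G(X); (2) X and Y are isometrically isomorphic and finite dimensional. -/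
open Filter Metric Topology

section Defs
variable {X Z : Type*} [NormedAddCommGroup X] [NormedSpace ℝ X]
  [NormedAddCommGroup Z] [NormedSpace ℝ Z]

/-- `A` is the Gâteaux derivative of `f` at `x`. -/
def HasGateauxDerivAt (f : X → Z) (A : X →L[ℝ] Z) (x : X) : Prop :=
  ∀ h : X, Tendsto (fun t : ℝ => t⁻¹ • (f (x + t • h) - f x)) (𝓝[≠] (0 : ℝ)) (𝓝 (A h))

/-- `f` is Gâteaux differentiable at `x`. -/
def GateauxDifferentiableAt (f : X → Z) (x : X) : Prop :=
  ∃ A : X →L[ℝ] Z, HasGateauxDerivAt f A x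

/-- Membership in `C_b^G(X)`: bounded, Lipschitz and everywhere Gâteaux differentiable. -/
def MemCbG (f : X → ℝ) : Prop :=
  (∃ C : ℝ, ∀ x, |f x| ≤ C) ∧ (∃ K : NNReal, LipschitzWith K f) ∧
    ∀ x, GateauxDifferentiableAt f x

/-- Membership in `C_b^F(X)`: bounded, Lipschitz and everywhere Fréchet differentiable. -/
def MemCbF (f : X → ℝ) : Prop :=
  (∃ C : ℝ, ∀ x, |f x| ≤ C) ∧ (∃ K : NNReal, LipschitzWith K f) ∧ Differentiable ℝ f
end Defs

/-- The best Lipschitz constant of `f`: the supremum of `|f x - f x'| / ‖x - x'‖` over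
all pairs (the quotient is interpreted as `0` when `x = x'`). -/
noncomputable def bestLip {X : Type*} [NormedAddCommGroup X] (f : X → ℝ) : ℝ :=
  sSup (Set.range fun p : X × X => |f p.1 - f p.2| / ‖p.1 - p.2‖)

/-!
A linear bijection `Φ` that preserves the best Lipschitz constant sends `1` to a constant function,
and preserving the sup norm makes that constant `±1`; after a change of sign, `Φ 1 = 1`. The sup
norm together with the unit determines the order, and a unital order isomorphism is multiplicative,
because evaluating the nonnegative function `Φ ((f - c)²)` at `y` with `c = Φ f y` gives
`(Φ f)² ≤ Φ (f²)`, and the same holds for `Φ⁻¹`.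

Bumps shrinking to a point `x` are carried by `Φ` to functions whose supports shrink to a point `y`,
with `Φ f y = f x` for all `f`. Hence `Φ f = f ∘ τ`, where `τ : Y → X` is an isometry because the
`1`-Lipschitz functions on both sides recover the distance; by the Mazur–Ulam theorem `τ` is affine.
It follows that every function of `C_b^G(Y)` lies in `C_b^F(Y)`. This is impossible in infinite
dimension: bumps placed at `eₙ / (n + 1)`, for unit vectors `eₙ` with uniformly separated
directions, and shrunk proportionally, add up to a Lipschitz function that vanishes near `0` along
every line but is not Fréchet differentiable at `0`. In finite dimension the two kinds of
differentiability agree for Lipschitz functions.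

One bump on either side suffices, since `Φ` and `Φ⁻¹` carry bumps to bumps.
-/

section BoundedLipschitz

variable {M : Type*} [PseudoMetricSpace M]

theorem lipschitzWith_mul_of_bounded {f g : M → ℝ} {C D K L : NNReal} (hf : LipschitzWith K f)
    (hg : LipschitzWith L g) (hfC : ∀ x, |f x| ≤ C) (hgD : ∀ x, |g x| ≤ D) :
    LipschitzWith (C * L + D * K) (f * g) := by
  refine LipschitzWith.of_dist_le_mul fun x y => ?_
  calc dist (f x * g x) (f y * g y)
      = |f x * (g x - g y) + g y * (f x - f y)| := by rw [Real.dist_eq]; ring_nf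
    _ ≤ |f x| * dist (g x) (g y) + |g y| * dist (f x) (f y) := by
        simpa only [abs_mul, Real.dist_eq] using abs_add_le (f x * (g x - g y)) (g y * (f x - f y))
    _ ≤ C * (L * dist x y) + D * (K * dist x y) := by
        gcongr
        exacts [hfC x, hg.dist_le_mul x y, hgD y, hf.dist_le_mul x y]
    _ = ↑(C * L + D * K) * dist x y := by push_cast; ring

variable (M) in
/-- The algebra of bounded Lipschitz real-valued functions. -/
def boundedLipschitz : Subalgebra ℝ (M → ℝ) where
  carrier := {f | (∃ C : ℝ, ∀ x, |f x| ≤ C) ∧ ∃ K : NNReal, LipschitzWith K f}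
  mul_mem' := by
    rintro f g ⟨⟨C, hC⟩, K, hK⟩ ⟨⟨D, hD⟩, L, hL⟩
    refine ⟨⟨C * D, fun x => ?_⟩, C.toNNReal * L + D.toNNReal * K,
      lipschitzWith_mul_of_bounded hK hL (fun x => (hC x).trans C.le_coe_toNNReal)
        fun x => (hD x).trans D.le_coe_toNNReal⟩
    rw [Pi.mul_apply, abs_mul]
    exact mul_le_mul (hC x) (hD x) (abs_nonneg _) ((abs_nonneg _).trans (hC x))
  add_mem' := by
    rintro f g ⟨⟨C, hC⟩, K, hK⟩ ⟨⟨D, hD⟩, L, hL⟩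
    exact ⟨⟨C + D, fun x => (abs_add_le _ _).trans (add_le_add (hC x) (hD x))⟩,
      K + L, hK.add hL⟩
  algebraMap_mem' c := ⟨⟨|c|, fun _ => le_rfl⟩, 0, LipschitzWith.const c⟩

end BoundedLipschitz

section Gateaux

variable {X Y Z : Type*} [NormedAddCommGroup X] [NormedSpace ℝ X]
  [NormedAddCommGroup Y] [NormedSpace ℝ Y] [NormedAddCommGroup Z] [NormedSpace ℝ Z]

theorem hasGateauxDerivAt_iff_hasLineDerivAt {f : X → Z} {A : X →L[ℝ] Z} {x : X} :
    HasGateauxDerivAt f A x ↔ ∀ h, HasLineDerivAt ℝ f (A h) x h :=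
  forall_congr' fun _ => hasLineDerivAt_iff_tendsto_slope_zero.symm

theorem HasGateauxDerivAt.add {f g : X → Z} {A B : X →L[ℝ] Z} {x : X}
    (hf : HasGateauxDerivAt f A x) (hg : HasGateauxDerivAt g B x) :
    HasGateauxDerivAt (f + g) (A + B) x := by
  rw [hasGateauxDerivAt_iff_hasLineDerivAt] at *
  exact fun h => HasDerivAt.add (hf h) (hg h)

theorem HasGateauxDerivAt.mul {f g : X → ℝ} {A B : X →L[ℝ] ℝ} {x : X}
    (hf : HasGateauxDerivAt f A x) (hg : HasGateauxDerivAt g B x) :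
    HasGateauxDerivAt (f * g) (g x • A + f x • B) x := by
  rw [hasGateauxDerivAt_iff_hasLineDerivAt] at *
  intro h
  have := HasDerivAt.mul (hf h) (hg h)
  simpa [HasLineDerivAt, mul_comm] using! this

theorem HasGateauxDerivAt.comp_affine {f : Y → Z} {A : Y →L[ℝ] Z} (L : X →L[ℝ] Y) (w : Y)
    {x : X} (hf : HasGateauxDerivAt f A (L x + w)) :
    HasGateauxDerivAt (fun x => f (L x + w)) (A.comp L) x := fun h => by
  simpa only [map_add, map_smul, add_right_comm, ContinuousLinearMap.comp_apply] using hf (L h)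

theorem GateauxDifferentiableAt.add {f g : X → Z} {x : X} (hf : GateauxDifferentiableAt f x)
    (hg : GateauxDifferentiableAt g x) : GateauxDifferentiableAt (f + g) x :=
  let ⟨_, hA⟩ := hf
  let ⟨_, hB⟩ := hg
  ⟨_, hA.add hB⟩

theorem GateauxDifferentiableAt.mul {f g : X → ℝ} {x : X} (hf : GateauxDifferentiableAt f x)
    (hg : GateauxDifferentiableAt g x) : GateauxDifferentiableAt (f * g) x :=
  let ⟨_, hA⟩ := hf
  let ⟨_, hB⟩ := hg
  ⟨_, hA.mul hB⟩

theorem GateauxDifferentiableAt.congr_of_eventuallyEq {f g : X → Z} {x : X}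
    (hf : GateauxDifferentiableAt f x) (hfg : g =ᶠ[𝓝 x] f) : GateauxDifferentiableAt g x := by
  obtain ⟨A, hA⟩ := hf
  rw [hasGateauxDerivAt_iff_hasLineDerivAt] at hA
  exact ⟨A, hasGateauxDerivAt_iff_hasLineDerivAt.2 fun h => (hA h).congr_of_eventuallyEq hfg⟩

theorem GateauxDifferentiableAt.of_differentiableAt {f : X → Z} {x : X}
    (hf : DifferentiableAt ℝ f x) : GateauxDifferentiableAt f x :=
  ⟨fderiv ℝ f x, hasGateauxDerivAt_iff_hasLineDerivAt.2 hf.hasFDerivAt.hasLineDerivAt⟩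

theorem HasGateauxDerivAt.not_differentiableAt {f : X → Z} {x : X} (hf : HasGateauxDerivAt f 0 x)
    {c : ℝ} (hc : 0 < c) {ι : Type*} {l : Filter ι} [l.NeBot] {z : ι → X} (hz : Tendsto z l (𝓝 x))
    (hzx : ∀ n, z n ≠ x) (hfz : ∀ n, c * ‖z n - x‖ ≤ ‖f (z n) - f x‖) :
    ¬DifferentiableAt ℝ f x := by
  intro hd
  have hfderiv : fderiv ℝ f x = 0 := by
    ext h
    have hline := hasGateauxDerivAt_iff_hasLineDerivAt.1 hf h
    rw [← hd.lineDeriv_eq_fderiv, hline.lineDeriv]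
  have hlittle := hasFDerivAt_iff_isLittleO.1 hd.hasFDerivAt
  obtain ⟨n, hn⟩ := (hz.eventually (hlittle.def (half_pos hc))).exists
  have hpos : 0 < ‖z n - x‖ := norm_sub_pos_iff.2 (hzx n)
  simp only [hfderiv, zero_apply, sub_zero] at hn
  nlinarith [hfz n]

theorem MemCbF.memCbG {f : X → ℝ} (hf : MemCbF f) : MemCbG f :=
  ⟨hf.1, hf.2.1, fun x => .of_differentiableAt (hf.2.2 x)⟩

theorem MemCbG.memCbF [FiniteDimensional ℝ X] {f : X → ℝ} (hf : MemCbG f) : MemCbF f := by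
  obtain ⟨hb, ⟨K, hK⟩, hG⟩ := hf
  refine ⟨hb, ⟨K, hK⟩, fun x => ?_⟩
  obtain ⟨A, hA⟩ := hG x
  have : ProperSpace X := FiniteDimensional.proper_real X
  exact (hK.hasFDerivAt_of_hasLineDerivAt_of_closure (s := Set.univ) (by simp)
    fun h _ => hasGateauxDerivAt_iff_hasLineDerivAt.1 hA h).differentiableAt

theorem MemCbG.comp_affine {f : Y → ℝ} (hf : MemCbG f) (L : X →L[ℝ] Y) (w : Y) :
    MemCbG fun x => f (L x + w) := by
  obtain ⟨⟨C, hC⟩, ⟨K, hK⟩, hG⟩ := hf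
  refine ⟨⟨C, fun x => hC _⟩, ⟨K * (‖L‖₊ + 0), hK.comp (L.lipschitz.add (.const w))⟩, fun x => ?_⟩
  obtain ⟨A, hA⟩ := hG (L x + w)
  exact ⟨_, hA.comp_affine L w⟩

theorem MemCbF.comp_affine {f : Y → ℝ} (hf : MemCbF f) (L : X →L[ℝ] Y) (w : Y) :
    MemCbF fun x => f (L x + w) := by
  obtain ⟨⟨C, hC⟩, ⟨K, hK⟩, hF⟩ := hf
  exact ⟨⟨C, fun x => hC _⟩, ⟨K * (‖L‖₊ + 0), hK.comp (L.lipschitz.add (.const w))⟩,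
    hF.comp (L.differentiable.add_const w)⟩

variable (X)

/-- `C_b^G(X)` as an algebra of functions. -/
def CbG : Subalgebra ℝ (X → ℝ) where
  carrier := {f | MemCbG f}
  mul_mem' hf hg :=
    let h := (boundedLipschitz X).mul_mem ⟨hf.1, hf.2.1⟩ ⟨hg.1, hg.2.1⟩
    ⟨h.1, h.2, fun x => (hf.2.2 x).mul (hg.2.2 x)⟩
  add_mem' hf hg :=
    let h := (boundedLipschitz X).add_mem ⟨hf.1, hf.2.1⟩ ⟨hg.1, hg.2.1⟩
    ⟨h.1, h.2, fun x => (hf.2.2 x).add (hg.2.2 x)⟩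
  algebraMap_mem' c :=
    let h := (boundedLipschitz X).algebraMap_mem c
    ⟨h.1, h.2, fun _ => .of_differentiableAt (differentiableAt_const c)⟩

/-- `C_b^F(X)` as an algebra of functions. -/
def CbF : Subalgebra ℝ (X → ℝ) where
  carrier := {f | MemCbF f}
  mul_mem' hf hg :=
    let h := (boundedLipschitz X).mul_mem ⟨hf.1, hf.2.1⟩ ⟨hg.1, hg.2.1⟩
    ⟨h.1, h.2, hf.2.2.mul hg.2.2⟩
  add_mem' hf hg :=
    let h := (boundedLipschitz X).add_mem ⟨hf.1, hf.2.1⟩ ⟨hg.1, hg.2.1⟩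
    ⟨h.1, h.2, hf.2.2.add hg.2.2⟩
  algebraMap_mem' c :=
    let h := (boundedLipschitz X).algebraMap_mem c
    ⟨h.1, h.2, differentiable_const c⟩

theorem CbG_le_boundedLipschitz : CbG X ≤ boundedLipschitz X := fun _ hf => ⟨hf.1, hf.2.1⟩

theorem CbF_le_CbG : CbF X ≤ CbG X := fun _ hf => MemCbF.memCbG hf

end Gateaux

section OrderIsomorphism

variable {α β : Type*} {A : Subalgebra ℝ (α → ℝ)} {B : Subalgebra ℝ (β → ℝ)}

theorem mul_eq_half_smul_sq_sub {R : Type*} [CommRing R] [Algebra ℝ R] (u v : R) :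
    u * v = (1 / 2 : ℝ) • ((u + v) ^ 2 - u ^ 2 - v ^ 2) := by
  rw [show (u + v) ^ 2 - u ^ 2 - v ^ 2 = (2 : ℝ) • (u * v) by rw [two_smul]; ring, smul_smul]
  norm_num

theorem sq_map_le_map_sq {Φ : A →ₗ[ℝ] B} (h1 : Φ 1 = 1) (hpos : ∀ f, 0 ≤ f → 0 ≤ Φ f) (f : A) :
    Φ f ^ 2 ≤ Φ (f ^ 2) := by
  intro y
  set c : ℝ := (Φ f : β → ℝ) y with hc
  have hsq : f ^ 2 - (2 * c) • f + (c ^ 2) • (1 : A) = (f - c • 1) ^ 2 := by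
    ext x
    simp
    ring
  have h : 0 ≤ Φ (f ^ 2 - (2 * c) • f + (c ^ 2) • (1 : A)) :=
    hpos _ (hsq ▸ fun x => sq_nonneg (((f - c • 1 : A) : α → ℝ) x))
  have hy : 0 ≤ (Φ (f ^ 2) : β → ℝ) y - 2 * c * c + c ^ 2 := by
    simpa [h1, ← hc] using h y
  change c ^ 2 ≤ (Φ (f ^ 2) : β → ℝ) y
  linarith

variable {Φ : A ≃ₗ[ℝ] B}

theorem map_sq_of_nonneg_iff (h1 : Φ 1 = 1) (hpos : ∀ f, 0 ≤ Φ f ↔ 0 ≤ f) (f : A) :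
    Φ (f ^ 2) = Φ f ^ 2 := by
  have hmono : ∀ g h : A, g ≤ h → Φ g ≤ Φ h := fun g h hgh =>
    sub_nonneg.1 (map_sub Φ h g ▸ (hpos _).2 (sub_nonneg.2 hgh))
  have hsymm : f ^ 2 ≤ Φ.symm (Φ f ^ 2) := by
    simpa using sq_map_le_map_sq (Φ := Φ.symm.toLinearMap) (by simp [← h1])
      (fun g hg => (hpos _).1 (by simpa using hg)) (Φ f)
  refine le_antisymm ?_ (sq_map_le_map_sq (Φ := Φ.toLinearMap) h1 (fun g => (hpos g).2) f)
  simpa using hmono _ _ hsymm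

theorem map_mul_of_nonneg_iff (h1 : Φ 1 = 1) (hpos : ∀ f, 0 ≤ Φ f ↔ 0 ≤ f) (f g : A) :
    Φ (f * g) = Φ f * Φ g := by
  rw [mul_eq_half_smul_sq_sub, mul_eq_half_smul_sq_sub]
  simp only [map_smul, map_sub, map_add, map_sq_of_nonneg_iff h1 hpos]

end OrderIsomorphism

section Norms

theorem nonneg_iff_exists_iSup_abs_sub_le {α : Type*} [Nonempty α] {f : α → ℝ}
    (hf : ∃ C : ℝ, ∀ x, |f x| ≤ C) : 0 ≤ f ↔ ∃ M : ℝ, ⨆ x, |M - f x| ≤ M := by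
  obtain ⟨C, hC⟩ := hf
  constructor
  · intro h0
    refine ⟨C, ciSup_le fun x => abs_le.2 ?_⟩
    have h0x : 0 ≤ f x := h0 x
    constructor <;> linarith [le_of_abs_le (hC x)]
  · rintro ⟨M, hM⟩ x
    have hbdd : BddAbove (Set.range fun x => |M - f x|) := by
      refine ⟨|M| + C, ?_⟩
      rintro _ ⟨x, rfl⟩
      exact (abs_sub _ _).trans (add_le_add_right (hC x) _)
    have hMx : |M - f x| ≤ M := (le_ciSup hbdd x).trans hM
    change 0 ≤ f x
    linarith [le_of_abs_le hMx]

theorem map_nonneg_iff_of_iSup_abs_eq {α β : Type*} [Nonempty α] [Nonempty β]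
    {A : Subalgebra ℝ (α → ℝ)} {B : Subalgebra ℝ (β → ℝ)}
    (hA : ∀ f ∈ A, ∃ C : ℝ, ∀ x, |f x| ≤ C) (hB : ∀ g ∈ B, ∃ C : ℝ, ∀ y, |g y| ≤ C)
    {Φ : A →ₗ[ℝ] B} (h1 : Φ 1 = 1)
    (hsup : ∀ f, ⨆ y, |(Φ f : β → ℝ) y| = ⨆ x, |(f : α → ℝ) x|) (f : A) :
    0 ≤ Φ f ↔ 0 ≤ f := by
  change 0 ≤ (Φ f : β → ℝ) ↔ 0 ≤ (f : α → ℝ)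
  rw [nonneg_iff_exists_iSup_abs_sub_le (hB _ (Φ f).2),
    nonneg_iff_exists_iSup_abs_sub_le (hA _ f.2)]
  refine exists_congr fun M => ?_
  have hM : ⨆ y, |M - (Φ f : β → ℝ) y| = ⨆ x, |M - (f : α → ℝ) x| := by
    simpa [h1] using hsup (M • 1 - f)
  rw [hM]

variable {X Y : Type*} [NormedAddCommGroup X] [NormedAddCommGroup Y]

theorem bestLip_le_iff {f : X → ℝ} (hf : ∃ K : NNReal, LipschitzWith K f) {C : NNReal} :
    bestLip f ≤ C ↔ LipschitzWith C f := by
  have hbound {K : NNReal} (hK : LipschitzWith K f) :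
      ∀ q ∈ Set.range fun p : X × X => |f p.1 - f p.2| / ‖p.1 - p.2‖, q ≤ K := by
    rintro _ ⟨p, rfl⟩
    exact div_le_of_le_mul₀ (norm_nonneg _) K.2
      (by simpa [dist_eq_norm] using hK.dist_le_mul p.1 p.2)
  constructor
  · intro h
    obtain ⟨K, hK⟩ := hf
    refine LipschitzWith.of_dist_le_mul fun x y => ?_
    rcases eq_or_ne x y with rfl | hxy
    · simp
    · have hq := (le_csSup ⟨_, hbound hK⟩ ⟨(x, y), rfl⟩).trans h
      rwa [div_le_iff₀ (norm_sub_pos_iff.2 hxy), ← dist_eq_norm, ← Real.dist_eq] at hq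
  · exact fun h => csSup_le (Set.range_nonempty _) (hbound h)

variable {A : Subalgebra ℝ (X → ℝ)} {B : Subalgebra ℝ (Y → ℝ)} {Φ : A ≃ₗ[ℝ] B}

theorem exists_map_one_eq_smul_one (hB : B ≤ boundedLipschitz Y)
    (hsup : ∀ f, ⨆ y, |(Φ f : Y → ℝ) y| = ⨆ x, |(f : X → ℝ) x|)
    (hlip : ∀ f, bestLip (Φ f : Y → ℝ) = bestLip (f : X → ℝ)) :
    ∃ c : ℝ, |c| = 1 ∧ Φ 1 = c • 1 := by
  have hconst : LipschitzWith 0 (Φ 1 : Y → ℝ) := by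
    have h1 : LipschitzWith 0 ((1 : A) : X → ℝ) := LipschitzWith.const 1
    rwa [← bestLip_le_iff (hB (Φ 1).2).2, hlip, bestLip_le_iff ⟨0, h1⟩]
  have hΦ1 : ∀ y, (Φ 1 : Y → ℝ) y = (Φ 1 : Y → ℝ) 0 := fun y =>
    dist_le_zero.1 (by simpa using hconst.dist_le_mul y 0)
  refine ⟨(Φ 1 : Y → ℝ) 0, by simpa [hΦ1] using hsup 1, ?_⟩
  ext y
  simp [hΦ1 y]

theorem exists_algEquiv_of_iSup_abs_eq_of_bestLip_eq (hA : A ≤ boundedLipschitz X)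
    (hB : B ≤ boundedLipschitz Y)
    (hsup : ∀ f, ⨆ y, |(Φ f : Y → ℝ) y| = ⨆ x, |(f : X → ℝ) x|)
    (hlip : ∀ f, bestLip (Φ f : Y → ℝ) = bestLip (f : X → ℝ)) :
    ∃ Ψ : A ≃ₐ[ℝ] B, (∀ f, 0 ≤ Ψ f ↔ 0 ≤ f) ∧
      ∀ f, LipschitzWith 1 (Ψ f : Y → ℝ) ↔ LipschitzWith 1 (f : X → ℝ) := by
  obtain ⟨c, hc, hΦ1⟩ := exists_map_one_eq_smul_one hB hsup hlip
  have hc0 : c ≠ 0 := by rintro rfl; simp at hc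
  let Θ : A ≃ₗ[ℝ] B := Φ.trans (LinearEquiv.smulOfNeZero ℝ B c hc0)
  have hΘ : ∀ f, Θ f = c • Φ f := fun f => rfl
  have hΘ1 : Θ 1 = 1 := by
    rw [hΘ, hΦ1, smul_smul, ← abs_mul_abs_self, hc, one_mul, one_smul]
  have hpos : ∀ f, 0 ≤ Θ f ↔ 0 ≤ f :=
    map_nonneg_iff_of_iSup_abs_eq (Φ := Θ.toLinearMap) (fun f hf => (hA hf).1)
      (fun g hg => (hB hg).1) hΘ1 fun f => by simpa [hΘ, abs_mul, hc] using hsup f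
  refine ⟨.ofLinearEquiv Θ hΘ1 (map_mul_of_nonneg_iff hΘ1 hpos), hpos, fun f => ?_⟩
  have hΘΦ : LipschitzWith 1 (Θ f : Y → ℝ) ↔ LipschitzWith 1 (Φ f : Y → ℝ) := by
    simp [hΘ, lipschitzWith_iff_dist_le_mul, Real.dist_eq, ← mul_sub, abs_mul, hc]
  rw [AlgEquiv.ofLinearEquiv_apply, hΘΦ, ← bestLip_le_iff (hB (Φ f).2).2, hlip,
    bestLip_le_iff (hA f.2).2]

end Norms

section MetricBanachStone

/-- A bump function: nonnegative, not identically zero and with bounded support. Continuity is left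
out, since bumps are only taken from algebras of Lipschitz functions. -/
structure IsBump {M : Type*} [PseudoMetricSpace M] (b : M → ℝ) : Prop where
  nonneg : 0 ≤ b
  ne_zero : b ≠ 0
  isBounded_tsupport : Bornology.IsBounded (tsupport b)

/-- Every point is charged by nonnegative members of `A` with arbitrarily small support. -/
def HasSmallBumps {M : Type*} [PseudoMetricSpace M] (A : Subalgebra ℝ (M → ℝ)) : Prop :=
  ∀ x, ∀ ε > 0, ∃ h ∈ A, 0 ≤ h ∧ h x ≠ 0 ∧ Function.support h ⊆ closedBall x ε

/-- The distance of `M` is the supremum of `dist (f x) (f x')` over the `1`-Lipschitz members `f`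
of `A`. -/
def SeparatesDist {M : Type*} [PseudoMetricSpace M] (A : Subalgebra ℝ (M → ℝ)) : Prop :=
  ∀ x x' r, (∀ f ∈ A, LipschitzWith 1 f → dist (f x) (f x') ≤ r) → dist x x' ≤ r

theorem map_apply_nonneg_of_nonneg_on_support {α β : Type*} {A : Subalgebra ℝ (α → ℝ)}
    {B : Subalgebra ℝ (β → ℝ)} {Φ : A →ₐ[ℝ] B} (hpos : ∀ f, 0 ≤ f → 0 ≤ Φ f) {h k : A} {y : β}
    (h0 : 0 ≤ h) (hk : ∀ x ∈ Function.support (h : α → ℝ), 0 ≤ (k : α → ℝ) x)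
    (hy : (Φ h : β → ℝ) y ≠ 0) : 0 ≤ (Φ k : β → ℝ) y := by
  have hhk : 0 ≤ h * k := fun x => by
    by_cases hx : (h : α → ℝ) x = 0
    · simp [hx]
    · exact mul_nonneg (h0 x) (hk x hx)
  have hmul : 0 ≤ (Φ h : β → ℝ) y * (Φ k : β → ℝ) y := by simpa using! hpos _ hhk y
  exact nonneg_of_mul_nonneg_right hmul ((hpos h h0 y).lt_of_ne' hy)

theorem dist_map_apply_le_of_support_subset_closedBall {X β : Type*} [PseudoMetricSpace X]
    {A : Subalgebra ℝ (X → ℝ)} {B : Subalgebra ℝ (β → ℝ)} {Φ : A →ₐ[ℝ] B}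
    (hpos : ∀ f, 0 ≤ f → 0 ≤ Φ f) {h f : A} {x : X} {y : β} {ε : ℝ} (h0 : 0 ≤ h)
    (hx : Function.support (h : X → ℝ) ⊆ closedBall x ε) (hy : (Φ h : β → ℝ) y ≠ 0)
    (hf : LipschitzWith 1 (f : X → ℝ)) : dist ((Φ f : β → ℝ) y) ((f : X → ℝ) x) ≤ ε := by
  have hfx : ∀ z ∈ Function.support (h : X → ℝ), |(f : X → ℝ) z - (f : X → ℝ) x| ≤ ε := by
    intro z hz
    simpa [Real.dist_eq] using (hf.dist_le_mul z x).trans (by simpa using hx hz)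
  have hlower : 0 ≤ (Φ (f - ((f : X → ℝ) x - ε) • 1) : β → ℝ) y :=
    map_apply_nonneg_of_nonneg_on_support hpos h0 (hy := hy) fun z hz => by
      simpa [sub_nonneg, add_comm] using! (abs_sub_le_iff.1 (hfx z hz)).2
  have hupper : 0 ≤ (Φ (((f : X → ℝ) x + ε) • 1 - f) : β → ℝ) y :=
    map_apply_nonneg_of_nonneg_on_support hpos h0 (hy := hy) fun z hz => by
      simpa [sub_nonneg, add_comm] using! (abs_sub_le_iff.1 (hfx z hz)).1
  rw [Real.dist_eq, abs_sub_le_iff]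
  simp only [map_sub, map_smul, map_one, AddSubgroupClass.coe_sub, Subalgebra.coe_smul,
    Subalgebra.coe_one, Pi.sub_apply, Pi.smul_apply, Pi.one_apply, smul_eq_mul, mul_one]
    at hlower hupper
  constructor <;> linarith

variable {X Y : Type*} [PseudoMetricSpace X] [PseudoMetricSpace Y]
  {A : Subalgebra ℝ (X → ℝ)} {B : Subalgebra ℝ (Y → ℝ)} {Φ : A ≃ₐ[ℝ] B}

variable (hpos : ∀ f, 0 ≤ Φ f ↔ 0 ≤ f)
  (hlip : ∀ f, LipschitzWith 1 (Φ f : Y → ℝ) ↔ LipschitzWith 1 (f : X → ℝ))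
include hpos hlip

theorem dist_le_add_of_support_subset_closedBall (hB : SeparatesDist B) {h h' : A}
    {x : X} {y y' : Y} {ε ε' : ℝ} (h0 : 0 ≤ h) (h0' : 0 ≤ h')
    (hx : Function.support (h : X → ℝ) ⊆ closedBall x ε)
    (hx' : Function.support (h' : X → ℝ) ⊆ closedBall x ε')
    (hy : (Φ h : Y → ℝ) y ≠ 0) (hy' : (Φ h' : Y → ℝ) y' ≠ 0) : dist y y' ≤ ε + ε' := by
  refine hB y y' _ fun g hg hg1 => ?_
  obtain ⟨f, hf⟩ := Φ.surjective ⟨g, hg⟩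
  obtain rfl : (Φ f : Y → ℝ) = g := congrArg Subtype.val hf
  rw [hlip] at hg1
  exact (dist_triangle_right _ _ ((f : X → ℝ) x)).trans (add_le_add
    (dist_map_apply_le_of_support_subset_closedBall (Φ := Φ.toAlgHom)
      (fun f => (hpos f).2) h0 hx hy hg1)
    (dist_map_apply_le_of_support_subset_closedBall (Φ := Φ.toAlgHom)
      (fun f => (hpos f).2) h0' hx' hy' hg1))

theorem IsBump.map_algEquiv (hB : SeparatesDist B) {b : A} (hb : IsBump (b : X → ℝ)) :
    IsBump (Φ b : Y → ℝ) := by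
  have hb0 : Φ b ≠ 0 := fun h =>
    hb.ne_zero (congrArg Subtype.val ((map_eq_zero_iff Φ Φ.injective).1 h))
  obtain ⟨x, -⟩ := Function.ne_iff.1 hb.ne_zero
  obtain ⟨R, hR⟩ := hb.isBounded_tsupport.subset_closedBall x
  have hsupp := (subset_tsupport _).trans hR
  refine ⟨(hpos b).2 hb.nonneg, fun h => hb0 (Subtype.ext h), Metric.isBounded_closure_iff.2 ?_⟩
  exact Metric.isBounded_iff.2 ⟨R + R, fun y hy y' hy' =>
    dist_le_add_of_support_subset_closedBall hpos hlip hB hb.nonneg hb.nonneg hsupp hsupp hy hy'⟩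

theorem exists_forall_map_apply_eq_of_lipschitzWith_one [CompleteSpace Y] (hA : HasSmallBumps A)
    (hB : SeparatesDist B) (x : X) :
    ∃ y, ∀ f : A, LipschitzWith 1 (f : X → ℝ) → (Φ f : Y → ℝ) y = (f : X → ℝ) x := by
  have hbump (n : ℕ) : ∃ h : A, 0 ≤ h ∧ (∃ y, (Φ h : Y → ℝ) y ≠ 0) ∧
      Function.support (h : X → ℝ) ⊆ closedBall x (1 / (n + 1)) := by
    obtain ⟨h, hhA, h0, hx, hsupp⟩ := hA x (1 / (n + 1)) Nat.one_div_pos_of_nat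
    refine ⟨⟨h, hhA⟩, h0, Function.ne_iff.1 fun hΦ => hx ?_, hsupp⟩
    have : Φ ⟨h, hhA⟩ = 0 := Subtype.ext hΦ
    rw [map_eq_zero_iff Φ Φ.injective] at this
    exact congrFun (congrArg Subtype.val this) x
  choose h h0 hy hsupp using hbump
  choose y hy using hy
  have hcauchy : CauchySeq y := by
    refine cauchySeq_of_le_tendsto_0 (fun n : ℕ => 1 / ((n : ℝ) + 1) + 1 / (n + 1)) ?_ ?_
    · intro m n N hm hn
      refine (dist_le_add_of_support_subset_closedBall hpos hlip hB (h0 m) (h0 n) (hsupp m)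
        (hsupp n) (hy m) (hy n)).trans ?_
      gcongr
    · simpa using (tendsto_one_div_add_atTop_nhds_zero_nat (𝕜 := ℝ)).add
        (tendsto_one_div_add_atTop_nhds_zero_nat (𝕜 := ℝ))
  obtain ⟨y₀, hy₀⟩ := cauchySeq_tendsto_of_complete hcauchy
  refine ⟨y₀, fun f hf => ?_⟩
  refine tendsto_nhds_unique ((((hlip f).2 hf).continuous.tendsto y₀).comp hy₀) ?_
  refine tendsto_iff_dist_tendsto_zero.2 (squeeze_zero (fun n => dist_nonneg) (fun n => ?_)
    (tendsto_one_div_add_atTop_nhds_zero_nat (𝕜 := ℝ)))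
  exact dist_map_apply_le_of_support_subset_closedBall (Φ := Φ.toAlgHom)
    (fun f => (hpos f).2) (h0 n) (hsupp n) (hy n) hf

theorem exists_forall_map_apply_eq [CompleteSpace Y] (hAL : A ≤ boundedLipschitz X)
    (hA : HasSmallBumps A) (hB : SeparatesDist B) (x : X) :
    ∃ y, ∀ f : A, (Φ f : Y → ℝ) y = (f : X → ℝ) x := by
  obtain ⟨y, hy⟩ := exists_forall_map_apply_eq_of_lipschitzWith_one hpos hlip hA hB x
  refine ⟨y, fun f => ?_⟩
  obtain ⟨K, hK⟩ := (hAL f.2).2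
  have hK0 : (0 : ℝ) < K + 1 := by positivity
  have hscaled : LipschitzWith 1 (((K + 1 : ℝ)⁻¹ • f : A) : X → ℝ) := by
    refine LipschitzWith.of_dist_le_mul fun u v => ?_
    have huv : dist ((f : X → ℝ) u) ((f : X → ℝ) v) ≤ (K + 1) * dist u v :=
      (hK.dist_le_mul u v).trans (by gcongr; simp)
    simpa [Real.dist_eq, ← mul_sub, abs_mul, abs_of_pos hK0, inv_mul_le_iff₀ hK0] using huv
  simpa [hK0.ne'] using hy _ hscaled

theorem exists_isBump_mem_iff (hA : SeparatesDist A) (hB : SeparatesDist B) :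
    (∃ b ∈ A, IsBump b) ↔ ∃ b ∈ B, IsBump b := by
  constructor
  · rintro ⟨b, hbA, hb⟩
    exact ⟨_, (Φ ⟨b, hbA⟩).2, IsBump.map_algEquiv hpos hlip hB hb⟩
  · rintro ⟨b, hbB, hb⟩
    exact ⟨_, (Φ.symm ⟨b, hbB⟩).2, IsBump.map_algEquiv (Φ := Φ.symm)
      (fun g => by simp [← hpos]) (fun g => by simp [← hlip]) hA hb⟩

end MetricBanachStone

theorem exists_isometryEquiv_forall_map_apply_eq {X Y : Type*} [MetricSpace X] [MetricSpace Y]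
    [CompleteSpace X] [CompleteSpace Y] {A : Subalgebra ℝ (X → ℝ)} {B : Subalgebra ℝ (Y → ℝ)}
    {Φ : A ≃ₐ[ℝ] B} (hpos : ∀ f, 0 ≤ Φ f ↔ 0 ≤ f)
    (hlip : ∀ f, LipschitzWith 1 (Φ f : Y → ℝ) ↔ LipschitzWith 1 (f : X → ℝ))
    (hAL : A ≤ boundedLipschitz X) (hBL : B ≤ boundedLipschitz Y) (hA : HasSmallBumps A)
    (hB : HasSmallBumps B) (hAd : SeparatesDist A) (hBd : SeparatesDist B) :
    ∃ τ : Y ≃ᵢ X, ∀ f y, (Φ f : Y → ℝ) y = (f : X → ℝ) (τ y) := by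
  choose σ hσ using exists_forall_map_apply_eq hpos hlip hAL hA hBd
  choose τ hτ using exists_forall_map_apply_eq (Φ := Φ.symm) (fun g => by simp [← hpos])
    (fun g => by simp [← hlip]) hBL hB hAd
  have hτΦ (f : A) (y : Y) : (Φ f : Y → ℝ) y = (f : X → ℝ) (τ y) := by simpa using (hτ y (Φ f)).symm
  have hτσ (x : X) : τ (σ x) = x := dist_le_zero.1 <| hAd _ _ _ fun f hf _ => by
    have hfx : f (τ (σ x)) = f x := (hτΦ ⟨f, hf⟩ (σ x)).symm.trans (hσ x ⟨f, hf⟩)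
    rw [hfx, dist_self]
  have hiso : Isometry τ := Isometry.of_dist_eq fun y y' => by
    refine le_antisymm (hAd _ _ _ fun f hf hf1 => ?_) (hBd _ _ _ fun g hg hg1 => ?_)
    · simpa [hτΦ] using ((hlip ⟨f, hf⟩).2 hf1).dist_le_mul y y'
    · obtain ⟨f, hf⟩ := Φ.surjective ⟨g, hg⟩
      obtain rfl : (Φ f : Y → ℝ) = g := congrArg Subtype.val hf
      simpa [hτΦ] using ((hlip f).1 hg1).dist_le_mul (τ y) (τ y')
  exact ⟨.mk' τ σ hτσ hiso, hτΦ⟩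

section NormedBumps

variable {X : Type*} [NormedAddCommGroup X] [NormedSpace ℝ X]

theorem IsBump.hasSmallBumps {A : Subalgebra ℝ (X → ℝ)}
    (hA : ∀ f ∈ A, ∀ (c : ℝ) (w : X), (fun x => f (c • x + w)) ∈ A) {b : X → ℝ} (hbA : b ∈ A)
    (hb : IsBump b) : HasSmallBumps A := by
  intro x ε hε
  obtain ⟨x₀, hx₀⟩ := Function.ne_iff.1 hb.ne_zero
  obtain ⟨R, hR0, hR⟩ := hb.isBounded_tsupport.subset_closedBall_lt 0 x₀
  refine ⟨_, hA b hbA (R / ε) (x₀ - (R / ε) • x),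
    fun z => hb.nonneg (_ • z + _), by simpa using hx₀, fun z hz => ?_⟩
  have hz' := hR (subset_tsupport b hz)
  have hcenter : (R / ε) • z + (x₀ - (R / ε) • x) - x₀ = (R / ε) • (z - x) := by module
  rw [mem_closedBall, dist_eq_norm, hcenter, norm_smul, Real.norm_of_nonneg (by positivity)] at hz'
  rw [mem_closedBall, dist_eq_norm]
  rwa [div_mul_eq_mul_div, div_le_iff₀ hε, mul_le_mul_iff_right₀ hR0] at hz'

theorem hasSmallBumps_CbG {b : X → ℝ} (hbG : b ∈ CbG X) (hb : IsBump b) :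
    HasSmallBumps (CbG X) :=
  hb.hasSmallBumps (fun _ hf c w => MemCbG.comp_affine hf (c • ContinuousLinearMap.id ℝ X) w) hbG

theorem hasSmallBumps_CbF {b : X → ℝ} (hbF : b ∈ CbF X) (hb : IsBump b) :
    HasSmallBumps (CbF X) :=
  hb.hasSmallBumps (fun _ hf c w => MemCbF.comp_affine hf (c • ContinuousLinearMap.id ℝ X) w) hbF

theorem lipschitzWith_one_inv_mul_sin (s : ℝ) :
    LipschitzWith 1 fun t : ℝ => s⁻¹ * Real.sin (s * t) := by
  refine LipschitzWith.of_dist_le_mul fun t t' => ?_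
  rcases eq_or_ne s 0 with rfl | hs
  · simp
  calc dist (s⁻¹ * Real.sin (s * t)) (s⁻¹ * Real.sin (s * t'))
      = |s|⁻¹ * dist (Real.sin (s * t)) (Real.sin (s * t')) := by
        rw [Real.dist_eq, ← mul_sub, abs_mul, abs_inv, ← Real.dist_eq]
    _ ≤ |s|⁻¹ * dist (s * t) (s * t') := by
        gcongr
        simpa using Real.lipschitzWith_sin.dist_le_mul (s * t) (s * t')
    _ = (1 : NNReal) * dist t t' := by
        rw [Real.dist_eq, ← mul_sub, abs_mul, inv_mul_cancel_left₀ (abs_ne_zero.2 hs),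
          ← Real.dist_eq, NNReal.coe_one, one_mul]

theorem memCbF_inv_mul_sin (g : StrongDual ℝ X) (s c : ℝ) :
    MemCbF fun x => s⁻¹ * Real.sin (s * (g x + c)) := by
  have hsin : MemCbF fun t : ℝ => s⁻¹ * Real.sin (s * t) := by
    refine ⟨⟨|s⁻¹|, fun t => ?_⟩, ⟨1, lipschitzWith_one_inv_mul_sin s⟩, by fun_prop⟩
    rw [abs_mul]
    exact mul_le_of_le_one_right (abs_nonneg _) (Real.abs_sin_le_one _)
  exact hsin.comp_affine g c

/-- A norming functional `g` is unbounded; the bounded functions `s⁻¹ * sin (s * g)` are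
`1`-Lipschitz as well and tend to `g` as `s → 0`. -/
theorem separatesDist_of_CbF_le {A : Subalgebra ℝ (X → ℝ)} (hA : CbF X ≤ A) : SeparatesDist A := by
  intro x x' r hr
  obtain ⟨g, hg1, hg⟩ := exists_dual_vector'' ℝ (x - x')
  have hsin (s : ℝ) : s⁻¹ * Real.sin (s * dist x x') ≤ r := by
    have hlip : LipschitzWith 1 fun z => s⁻¹ * Real.sin (s * (g z + -g x')) := by
      have hg1' : LipschitzWith 1 g := g.lipschitz.weaken hg1
      simpa using! (lipschitzWith_one_inv_mul_sin s).comp (hg1'.add (.const (-g x')))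
    have hdist : g x + -g x' = dist x x' := by
      rw [← sub_eq_add_neg, ← map_sub, hg, dist_eq_norm, RCLike.ofReal_real_eq_id, id]
    refine (le_abs_self _).trans ?_
    simpa [hdist] using hr _ (hA (memCbF_inv_mul_sin g s (-g x'))) hlip
  have hderiv : HasDerivAt (fun s => Real.sin (s * dist x x')) (dist x x') 0 := by
    simpa using ((hasDerivAt_id (0 : ℝ)).mul_const (dist x x')).sin
  rw [hasDerivAt_iff_tendsto_slope_zero] at hderiv
  exact le_of_tendsto hderiv (.of_forall fun s => by simpa using hsin s)

end NormedBumps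

section DirectionalGluing

variable {E : Type*} [NormedAddCommGroup E] [NormedSpace ℝ E] {ι : Type*}

theorem lipschitzWith_finsum_of_forall_exists_ne_eq_zero {M F : Type*} [PseudoMetricSpace M]
    [SeminormedAddCommGroup F] {φ : ι → M → F} {K : NNReal} (hK : ∀ n, LipschitzWith K (φ n))
    (hφ : ∀ z, ∃ n, ∀ m ≠ n, φ m z = 0) : LipschitzWith (K + K) fun z => ∑ᶠ n, φ n z := by
  refine LipschitzWith.of_dist_le_mul fun z w => ?_
  obtain ⟨n, hn⟩ := hφ z
  obtain ⟨m, hm⟩ := hφ w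
  rw [finsum_eq_single _ n hn, finsum_eq_single _ m hm, NNReal.coe_add, add_mul]
  rcases eq_or_ne n m with rfl | hnm
  · exact ((hK n).dist_le_mul z w).trans (le_add_of_nonneg_left (by positivity))
  · calc dist (φ n z) (φ m w) ≤ dist (φ n z) 0 + dist 0 (φ m w) := dist_triangle _ _ _
      _ = dist (φ n z) (φ n w) + dist (φ m z) (φ m w) := by rw [hm n hnm, hn m hnm.symm]
      _ ≤ K * dist z w + K * dist z w :=
          add_le_add ((hK n).dist_le_mul z w) ((hK m).dist_le_mul z w)

/-- Near every direction at most one member of the family is nonzero. The origin counts as a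
direction of its own, since it is its own normalization. -/
def DirectionallyDisjoint (φ : ι → E → ℝ) : Prop :=
  ∀ u : E, ∃ n, ∀ᶠ v in 𝓝 u, ∀ z, NormedSpace.normalize z = v → ∀ m ≠ n, φ m z = 0

theorem continuousAt_normalize {x : E} (hx : x ≠ 0) :
    ContinuousAt (NormedSpace.normalize : E → E) x :=
  (continuousAt_id.norm.inv₀ (norm_ne_zero_iff.2 hx)).smul continuousAt_id

theorem norm_normalize_sub_le {e : E} (he : ‖e‖ = 1) (z : E) :
    ‖NormedSpace.normalize z - e‖ ≤ 2 * ‖z - e‖ := by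
  have hz : ‖NormedSpace.normalize z - z‖ ≤ ‖z - e‖ := by
    rcases eq_or_ne z 0 with rfl | hz0
    · simp
    calc ‖NormedSpace.normalize z - z‖
        = ‖(1 - ‖z‖) • NormedSpace.normalize z‖ := by
          rw [sub_smul, one_smul, NormedSpace.norm_smul_normalize]
      _ = |‖e‖ - ‖z‖| := by
          rw [norm_smul, NormedSpace.norm_normalize_eq_one_iff.2 hz0, mul_one, he, Real.norm_eq_abs]
      _ ≤ ‖z - e‖ := norm_sub_rev z e ▸ abs_norm_sub_norm_le e z
  calc ‖NormedSpace.normalize z - e‖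
      ≤ ‖NormedSpace.normalize z - z‖ + ‖z - e‖ := norm_sub_le_norm_sub_add_norm_sub _ _ _
    _ ≤ 2 * ‖z - e‖ := by linarith

theorem directionallyDisjoint_of_separated [Nonempty ι] {e : ι → E} {φ : ι → E → ℝ} {δ : ℝ}
    (hδ : 0 < δ) (he : Pairwise fun m n => 4 * δ ≤ ‖e m - e n‖)
    (hφ : ∀ n z, φ n z ≠ 0 → ‖NormedSpace.normalize z - e n‖ ≤ δ) : DirectionallyDisjoint φ := by
  intro u
  have hunique : ∃ n, ∀ m ≠ n, 2 * δ ≤ ‖e m - u‖ := by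
    by_cases! h : ∃ n, ‖e n - u‖ < 2 * δ
    · obtain ⟨n, hn⟩ := h
      refine ⟨n, fun m hm => ?_⟩
      have := norm_sub_le_norm_sub_add_norm_sub (e m) u (e n)
      linarith [he hm, norm_sub_rev u (e n)]
    · exact ⟨Classical.arbitrary ι, fun m _ => h m⟩
  obtain ⟨n, hn⟩ := hunique
  refine ⟨n, eventually_of_mem (ball_mem_nhds u hδ) fun v hv z hz m hm => ?_⟩
  by_contra hne
  have := norm_sub_le_norm_sub_add_norm_sub (e m) v u
  rw [mem_ball, dist_eq_norm] at hv
  linarith [hn m hm, hz ▸ hφ m z hne, norm_sub_rev (e m) v]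

namespace DirectionallyDisjoint

variable {φ : ι → E → ℝ} (hφ : DirectionallyDisjoint φ)
include hφ

theorem exists_forall_ne_eq_zero (z : E) : ∃ n, ∀ m ≠ n, φ m z = 0 :=
  let ⟨n, hn⟩ := hφ (NormedSpace.normalize z)
  ⟨n, hn.self_of_nhds z rfl⟩

theorem finsum_eq_of_apply_ne_zero {n : ι} {z : E} (hz : φ n z ≠ 0) : ∑ᶠ m, φ m z = φ n z := by
  obtain ⟨k, hk⟩ := hφ.exists_forall_ne_eq_zero z
  obtain rfl : n = k := not_ne_iff.1 fun hnk => hz (hk n hnk)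
  exact finsum_eq_single _ n hk

theorem exists_finsum_eventuallyEq {x : E} (hx : x ≠ 0) :
    ∃ n, (fun z => ∑ᶠ m, φ m z) =ᶠ[𝓝 x] φ n := by
  obtain ⟨n, hn⟩ := hφ (NormedSpace.normalize x)
  exact ⟨n, ((continuousAt_normalize hx).eventually hn).mono fun z hz =>
    finsum_eq_single _ n (hz z rfl)⟩

theorem eventually_finsum_smul_eq_zero (h0 : ∀ n, φ n =ᶠ[𝓝 0] 0) (v : E) :
    ∀ᶠ t : ℝ in 𝓝 0, 0 < t → ∑ᶠ m, φ m (t • v) = 0 := by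
  obtain ⟨n, hn⟩ := hφ (NormedSpace.normalize v)
  have htv : Tendsto (fun t : ℝ => t • v) (𝓝 0) (𝓝 0) :=
    Continuous.tendsto' (by fun_prop) _ _ (zero_smul ℝ v)
  filter_upwards [htv.eventually (h0 n)] with t ht ht0
  rw [finsum_eq_single _ n (hn.self_of_nhds _ (NormedSpace.normalize_smul_of_pos ht0 v)), ht,
    Pi.zero_apply]

theorem hasGateauxDerivAt_finsum_zero (h0 : ∀ n, φ n =ᶠ[𝓝 0] 0) :
    HasGateauxDerivAt (fun z => ∑ᶠ n, φ n z) 0 0 := by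
  rw [hasGateauxDerivAt_iff_hasLineDerivAt]
  intro h
  have hneg : Tendsto (fun t : ℝ => -t) (𝓝 0) (𝓝 0) :=
    Continuous.tendsto' (by fun_prop) _ _ neg_zero
  have hzero : (fun t : ℝ => ∑ᶠ n, φ n (0 + t • h)) =ᶠ[𝓝 0] fun _ => 0 := by
    filter_upwards [hφ.eventually_finsum_smul_eq_zero h0 h,
      hneg.eventually (hφ.eventually_finsum_smul_eq_zero h0 (-h))] with t hpos hneg
    rw [neg_smul_neg] at hneg
    rw [zero_add]
    rcases lt_trichotomy t 0 with ht | rfl | ht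
    · exact hneg (neg_pos.2 ht)
    · simp [(h0 _).self_of_nhds]
    · exact hpos ht
  exact (hasDerivAt_const (0 : ℝ) (0 : ℝ)).congr_of_eventuallyEq hzero

theorem memCbG_finsum (hG : ∀ n, MemCbG (φ n)) {C : ℝ} (hC : ∀ n z, |φ n z| ≤ C) {K : NNReal}
    (hK : ∀ n, LipschitzWith K (φ n)) (h0 : ∀ n, φ n =ᶠ[𝓝 0] 0) :
    MemCbG fun z => ∑ᶠ n, φ n z := by
  refine ⟨⟨C, fun z => ?_⟩, ⟨_, lipschitzWith_finsum_of_forall_exists_ne_eq_zero hK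
    hφ.exists_forall_ne_eq_zero⟩, fun x => ?_⟩
  · obtain ⟨n, hn⟩ := hφ.exists_forall_ne_eq_zero z
    simpa only [finsum_eq_single (φ · z) n hn] using hC n z
  · rcases eq_or_ne x 0 with rfl | hx
    · exact ⟨0, hφ.hasGateauxDerivAt_finsum_zero h0⟩
    · obtain ⟨n, hn⟩ := hφ.exists_finsum_eventuallyEq hx
      exact ((hG n).2.2 x).congr_of_eventuallyEq hn

theorem not_differentiableAt_finsum_zero (h0 : ∀ n, φ n =ᶠ[𝓝 0] 0) {c : ℝ} (hc : 0 < c)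
    {l : Filter ι} [l.NeBot] {z : ι → E} (hz : Tendsto z l (𝓝 0)) (hz0 : ∀ n, z n ≠ 0)
    (hφz : ∀ n, c * ‖z n‖ ≤ |φ n (z n)|) : ¬DifferentiableAt ℝ (fun z => ∑ᶠ n, φ n z) 0 := by
  refine (hφ.hasGateauxDerivAt_finsum_zero h0).not_differentiableAt hc hz hz0 fun n => ?_
  have hφz0 : φ n (z n) ≠ 0 :=
    abs_pos.1 ((mul_pos hc (norm_pos_iff.2 (hz0 n))).trans_le (hφz n))
  have hzero : ∑ᶠ m, φ m 0 = 0 := by simp [(h0 _).self_of_nhds]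
  simpa [hφ.finsum_eq_of_apply_ne_zero hφz0, hzero] using hφz n

end DirectionallyDisjoint

end DirectionalGluing

section InfiniteDimension

theorem exists_seq_norm_eq_one_le_norm_sub {𝕜 E : Type*} [RCLike 𝕜] [NormedAddCommGroup E]
    [NormedSpace 𝕜 E] (hE : ¬FiniteDimensional 𝕜 E) {r : ℝ} (hr : r < 1) :
    ∃ e : ℕ → E, (∀ n, ‖e n‖ = 1) ∧ Pairwise fun m n => r ≤ ‖e m - e n‖ := by
  have : Std.Symm fun x y : E => r ≤ ‖x - y‖ := ⟨fun x y h => by rwa [norm_sub_rev]⟩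
  refine exists_seq_of_forall_finset_exists' (fun x : E => ‖x‖ = 1) (fun x y => r ≤ ‖x - y‖)
    fun s _ => ?_
  let F := Submodule.span 𝕜 (s : Set E)
  have hF : F ≠ ⊤ := fun h => hE (.of_fg_top (h ▸ ⟨s, rfl⟩))
  have : FiniteDimensional 𝕜 F := .of_fg ⟨s, rfl⟩
  obtain ⟨x, -, hx1, hx⟩ := riesz_lemma_of_lt_one F.closed_of_finiteDimensional
    (SetLike.exists_not_mem_of_ne_top F hF) hr
  exact ⟨x, hx1, fun y hy => norm_sub_rev x y ▸ hx y (Submodule.subset_span hy)⟩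

variable {E : Type*} [NormedAddCommGroup E] [NormedSpace ℝ E]

/-- The bump `b`, shrunk by the factor `r` in both argument and value and recentred at `r • e`. -/
noncomputable def scaledBump (b : E → ℝ) (e : E) (r : ℝ) (z : E) : ℝ := r * b (r⁻¹ • z - e)

section ScaledBump

variable {b : E → ℝ} {e : E} {r : ℝ}

theorem scaledBump_smul_self (hr : r ≠ 0) : scaledBump b e r (r • e) = r * b 0 := by
  rw [scaledBump, inv_smul_smul₀ hr, sub_self]

theorem memCbG_scaledBump (hb : MemCbG b) : MemCbG (scaledBump b e r) := by
  have heq : scaledBump b e r =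
      r • fun z => b ((r⁻¹ • ContinuousLinearMap.id ℝ E) z + -e) := by
    ext z
    simp [scaledBump, sub_eq_add_neg]
  exact heq ▸ (CbG E).smul_mem (hb.comp_affine _ (-e)) r

theorem abs_scaledBump_le {C : ℝ} (hC : ∀ x, |b x| ≤ C) (hr0 : 0 ≤ r) (hr1 : r ≤ 1) (z : E) :
    |scaledBump b e r z| ≤ C := by
  rw [scaledBump, abs_mul, abs_of_nonneg hr0]
  exact (mul_le_of_le_one_left (abs_nonneg _) hr1).trans (hC _)

theorem lipschitzWith_scaledBump {K : NNReal} (hb : LipschitzWith K b) :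
    LipschitzWith K (scaledBump b e r) := by
  refine LipschitzWith.of_dist_le_mul fun z w => ?_
  rcases eq_or_ne r 0 with rfl | hr
  · simp only [scaledBump, zero_mul, dist_self]
    positivity
  calc dist (scaledBump b e r z) (scaledBump b e r w)
      = |r| * dist (b (r⁻¹ • z - e)) (b (r⁻¹ • w - e)) := by
        rw [scaledBump, scaledBump, Real.dist_eq, ← mul_sub, abs_mul, Real.dist_eq]
    _ ≤ |r| * (K * dist (r⁻¹ • z - e) (r⁻¹ • w - e)) := by gcongr; exact hb.dist_le_mul _ _
    _ = K * dist z w := by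
        rw [dist_sub_right, dist_smul₀, norm_inv, Real.norm_eq_abs]
        field_simp

theorem norm_normalize_sub_le_of_scaledBump_ne_zero {δ : ℝ}
    (hb : Function.support b ⊆ closedBall 0 δ) (he : ‖e‖ = 1) (hr : 0 < r) {z : E}
    (hz : scaledBump b e r z ≠ 0) : ‖NormedSpace.normalize z - e‖ ≤ 2 * δ := by
  have hzδ : ‖r⁻¹ • z - e‖ ≤ δ := mem_closedBall_zero_iff.1 (hb (right_ne_zero_of_mul hz))
  rw [← NormedSpace.normalize_smul_of_pos (inv_pos.2 hr) z]
  exact (norm_normalize_sub_le he _).trans (by gcongr)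

theorem scaledBump_eventuallyEq_zero {δ : ℝ} (hδ : δ < 1)
    (hb : Function.support b ⊆ closedBall 0 δ) (he : ‖e‖ = 1) : scaledBump b e r =ᶠ[𝓝 0] 0 := by
  have hnorm : Tendsto (fun z : E => ‖r⁻¹ • z - e‖) (𝓝 0) (𝓝 1) :=
    Continuous.tendsto' (by fun_prop) _ _ (by simp [he])
  filter_upwards [hnorm.eventually (lt_mem_nhds hδ)] with z hz
  have hbz : b (r⁻¹ • z - e) = 0 := by
    by_contra hne
    exact hz.not_ge (mem_closedBall_zero_iff.1 (hb hne))
  rw [scaledBump, hbz, mul_zero, Pi.zero_apply]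

end ScaledBump

theorem exists_memCbG_not_memCbF (hE : ¬FiniteDimensional ℝ E) (hA : HasSmallBumps (CbG E)) :
    ∃ f : E → ℝ, MemCbG f ∧ ¬MemCbF f := by
  obtain ⟨b, hbG, -, hb0, hsupp⟩ := hA 0 (1 / 16) (by norm_num)
  obtain ⟨⟨C, hC⟩, ⟨K, hK⟩, -⟩ := id hbG
  obtain ⟨e, he, hsep⟩ := exists_seq_norm_eq_one_le_norm_sub hE (r := 4 * (2 * (1 / 16)))
    (by norm_num)
  let r : ℕ → ℝ := fun n => 1 / (n + 1)
  have hr0 (n : ℕ) : 0 < r n := Nat.one_div_pos_of_nat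
  have hr1 (n : ℕ) : r n ≤ 1 := (div_le_one (by positivity)).2 (by simp)
  have hnorm (n : ℕ) : ‖r n • e n‖ = r n := by
    rw [norm_smul, he, mul_one, Real.norm_of_nonneg (hr0 n).le]
  let φ : ℕ → E → ℝ := fun n => scaledBump b (e n) (r n)
  have hφ : DirectionallyDisjoint φ := directionallyDisjoint_of_separated (by norm_num) hsep
    fun n z => norm_normalize_sub_le_of_scaledBump_ne_zero hsupp (he n) (hr0 n)
  have hzero (n : ℕ) : φ n =ᶠ[𝓝 0] 0 := scaledBump_eventuallyEq_zero (by norm_num) hsupp (he n)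
  refine ⟨fun z => ∑ᶠ n, φ n z, hφ.memCbG_finsum (fun n => memCbG_scaledBump hbG)
    (fun n => abs_scaledBump_le hC (hr0 n).le (hr1 n)) (fun n => lipschitzWith_scaledBump hK) hzero,
    fun hF => ?_⟩
  have hφe (n : ℕ) : |b 0| * ‖r n • e n‖ ≤ |φ n (r n • e n)| := by
    have hφe : φ n (r n • e n) = r n * b 0 := scaledBump_smul_self (hr0 n).ne'
    rw [hφe, abs_mul, abs_of_pos (hr0 n), hnorm, mul_comm]
  refine hφ.not_differentiableAt_finsum_zero (l := atTop) hzero (abs_pos.2 hb0) ?_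
    (fun n => smul_ne_zero (hr0 n).ne' (norm_ne_zero_iff.1 (by simp [he]))) hφe (hF.2.2 0)
  exact tendsto_zero_iff_norm_tendsto_zero.2
    (by simpa only [hnorm] using tendsto_one_div_add_atTop_nhds_zero_nat)

end InfiniteDimension

section Isometries

theorem bestLip_comp_isometryEquiv {X Y : Type*} [NormedAddCommGroup X] [NormedAddCommGroup Y]
    (σ : X ≃ᵢ Y) (f : Y → ℝ) : bestLip (f ∘ σ) = bestLip f := by
  refine congrArg sSup (Eq.trans ?_ ((σ.toEquiv.prodCongr σ.toEquiv).surjective.range_comp _))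
  simp [Function.comp_def, ← dist_eq_norm, σ.dist_eq]

variable {X Y : Type*} [NormedAddCommGroup X] [NormedSpace ℝ X]
  [NormedAddCommGroup Y] [NormedSpace ℝ Y]

theorem MemCbG.comp_isometryEquiv {f : Y → ℝ} (hf : MemCbG f) (σ : X ≃ᵢ Y) : MemCbG (f ∘ σ) := by
  have hσ : f ∘ σ = fun x => f ((σ.toRealLinearIsometryEquiv : X →L[ℝ] Y) x + σ 0) := by
    ext x
    simp
  exact hσ ▸ hf.comp_affine _ _

theorem finiteDimensional_of_memCbG_imp_memCbF (hX : HasSmallBumps (CbG X))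
    (h : ∀ f : X → ℝ, MemCbG f → MemCbF f) : FiniteDimensional ℝ X := by
  by_contra hinf
  obtain ⟨f, hG, hF⟩ := exists_memCbG_not_memCbF hinf hX
  exact hF (h f hG)

/-- Composition with an isometry. -/
def compIsometryEquiv [FiniteDimensional ℝ Y] (σ : Y ≃ᵢ X) : CbG X ≃ₗ[ℝ] CbF Y where
  toFun f := ⟨(f : X → ℝ) ∘ σ, (MemCbG.comp_isometryEquiv f.2 σ).memCbF⟩
  invFun g := ⟨(g : Y → ℝ) ∘ σ.symm, MemCbG.comp_isometryEquiv (MemCbF.memCbG g.2) σ.symm⟩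
  map_add' _ _ := rfl
  map_smul' _ _ := rfl
  left_inv f := Subtype.ext (by ext; simp)
  right_inv g := Subtype.ext (by ext; simp)

theorem exists_bijective_iff_exists_linearEquiv :
    (∃ Φ : {f : X → ℝ // MemCbG f} → {g : Y → ℝ // MemCbF g},
      Function.Bijective Φ ∧
      (∀ f g h : {f : X → ℝ // MemCbG f}, (h : X → ℝ) = (f : X → ℝ) + (g : X → ℝ) →
        (Φ h : Y → ℝ) = (Φ f : Y → ℝ) + (Φ g : Y → ℝ)) ∧
      (∀ (c : ℝ) (f g : {f : X → ℝ // MemCbG f}), (g : X → ℝ) = c • (f : X → ℝ) →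
        (Φ g : Y → ℝ) = c • (Φ f : Y → ℝ)) ∧
      (∀ f : {f : X → ℝ // MemCbG f},
        (⨆ y : Y, |(Φ f : Y → ℝ) y|) = ⨆ x : X, |(f : X → ℝ) x|) ∧
      (∀ f : {f : X → ℝ // MemCbG f}, bestLip (Φ f : Y → ℝ) = bestLip (f : X → ℝ))) ↔
    ∃ Φ : CbG X ≃ₗ[ℝ] CbF Y,
      (∀ f, ⨆ y, |(Φ f : Y → ℝ) y| = ⨆ x, |(f : X → ℝ) x|) ∧
      ∀ f, bestLip (Φ f : Y → ℝ) = bestLip (f : X → ℝ) := by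
  constructor
  · rintro ⟨Φ, hΦ, hadd, hsmul, hsup, hlip⟩
    let L : CbG X →ₗ[ℝ] CbF Y :=
      { toFun := Φ
        map_add' f g := Subtype.ext (hadd f g (f + g) rfl)
        map_smul' c f := Subtype.ext (hsmul c f (c • f) rfl) }
    exact ⟨.ofBijective L hΦ, hsup, hlip⟩
  · rintro ⟨Φ, hsup, hlip⟩
    refine ⟨Φ, Φ.bijective, fun (f g h : CbG X) hfg => ?_,
      fun c (f g : CbG X) hfg => ?_, hsup, hlip⟩
    · obtain rfl : h = f + g := Subtype.ext hfg
      exact congrArg Subtype.val (map_add Φ f g)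
    · obtain rfl : g = c • f := Subtype.ext hfg
      exact congrArg Subtype.val (map_smul Φ c f)

end Isometries

theorem banach_stone_like_general {X Y : Type*} [NormedAddCommGroup X] [NormedSpace ℝ X]
    [CompleteSpace X] [NormedAddCommGroup Y] [NormedSpace ℝ Y] [CompleteSpace Y]
    (hbump : (∃ b ∈ CbG X, IsBump b) ∨ ∃ b ∈ CbF Y, IsBump b) :
    (∃ Φ : CbG X ≃ₗ[ℝ] CbF Y, (∀ f, ⨆ y, |(Φ f : Y → ℝ) y| = ⨆ x, |(f : X → ℝ) x|) ∧
      ∀ f, bestLip (Φ f : Y → ℝ) = bestLip (f : X → ℝ)) ↔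
    Nonempty (X ≃ₗᵢ[ℝ] Y) ∧ FiniteDimensional ℝ X ∧ FiniteDimensional ℝ Y := by
  constructor
  · rintro ⟨Φ, hsup, hlip⟩
    have hGL := CbG_le_boundedLipschitz X
    have hFL := (CbF_le_CbG Y).trans (CbG_le_boundedLipschitz Y)
    have hGd : SeparatesDist (CbG X) := separatesDist_of_CbF_le (CbF_le_CbG X)
    have hFd : SeparatesDist (CbF Y) := separatesDist_of_CbF_le le_rfl
    obtain ⟨Ψ, hpos, hΨ⟩ := exists_algEquiv_of_iSup_abs_eq_of_bestLip_eq hGL hFL hsup hlip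
    have hiff := exists_isBump_mem_iff hpos hΨ hGd hFd
    obtain ⟨bX, hbX_mem, hbX⟩ := hbump.elim id hiff.2
    obtain ⟨bY, hbY_mem, hbY⟩ := hiff.1 ⟨bX, hbX_mem, hbX⟩
    obtain ⟨τ, hτ⟩ := exists_isometryEquiv_forall_map_apply_eq hpos hΨ hGL hFL
      (hasSmallBumps_CbG hbX_mem hbX) (hasSmallBumps_CbF hbY_mem hbY) hGd hFd
    have hGF : ∀ f : Y → ℝ, MemCbG f → MemCbF f := fun f hf => by
      have hΨf : Ψ ⟨f ∘ τ.symm, hf.comp_isometryEquiv τ.symm⟩ = f := by ext y; simp [hτ]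
      exact hΨf ▸ (Ψ _).2
    have hY : FiniteDimensional ℝ Y :=
      finiteDimensional_of_memCbG_imp_memCbF (hasSmallBumps_CbG (CbF_le_CbG Y hbY_mem) hbY) hGF
    let T : Y ≃ₗᵢ[ℝ] X := τ.toRealLinearIsometryEquiv
    exact ⟨⟨T.symm⟩, T.toLinearEquiv.finiteDimensional, hY⟩
  · rintro ⟨⟨T⟩, -, hY⟩
    let σ : Y ≃ᵢ X := T.symm.toIsometryEquiv
    exact ⟨compIsometryEquiv σ, fun f => σ.surjective.iSup_comp fun x => |(f : X → ℝ) x|,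
      fun f => bestLip_comp_isometryEquiv σ f⟩

/-- **a Banach–Stone-like theorem.** Let `X` and `Y` be Banach spaces such
that `X` admits a bump function which is bounded, Lipschitz and everywhere Gâteaux
differentiable, and `Y` admits a bump function which is bounded, Lipschitz and everywhere
Fréchet differentiable. Then there is a linear bijection `Φ : C_b^G(X) → C_b^F(Y)`
preserving the sup norm and the best Lipschitz constant if and only if `X` and `Y` are
isometrically isomorphic and finite dimensional. -/
theorem banach_stone_like
    {X Y : Type*} [NormedAddCommGroup X] [NormedSpace ℝ X] [CompleteSpace X]
    [NormedAddCommGroup Y] [NormedSpace ℝ Y] [CompleteSpace Y]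
    (bX : X → ℝ) (hbX_nonneg : ∀ x, 0 ≤ bX x) (hbX_ne : bX ≠ 0)
    (hbX_supp : Bornology.IsBounded (tsupport bX)) (hbX_mem : MemCbG bX)
    (bY : Y → ℝ) (hbY_nonneg : ∀ y, 0 ≤ bY y) (hbY_ne : bY ≠ 0)
    (hbY_supp : Bornology.IsBounded (tsupport bY)) (hbY_mem : MemCbF bY) :
    (∃ Φ : {f : X → ℝ // MemCbG f} → {g : Y → ℝ // MemCbF g},
      Function.Bijective Φ ∧
      (∀ f g h : {f : X → ℝ // MemCbG f}, (h : X → ℝ) = (f : X → ℝ) + (g : X → ℝ) →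
        (Φ h : Y → ℝ) = (Φ f : Y → ℝ) + (Φ g : Y → ℝ)) ∧
      (∀ (c : ℝ) (f g : {f : X → ℝ // MemCbG f}), (g : X → ℝ) = c • (f : X → ℝ) →
        (Φ g : Y → ℝ) = c • (Φ f : Y → ℝ)) ∧
      (∀ f : {f : X → ℝ // MemCbG f},
        (⨆ y : Y, |(Φ f : Y → ℝ) y|) = ⨆ x : X, |(f : X → ℝ) x|) ∧
      (∀ f : {f : X → ℝ // MemCbG f}, bestLip (Φ f : Y → ℝ) = bestLip (f : X → ℝ))) ↔
    (Nonempty (X ≃ₗᵢ[ℝ] Y) ∧ FiniteDimensional ℝ X ∧ FiniteDimensional ℝ Y) := by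
  exact exists_bijective_iff_exists_linearEquiv.trans
    (banach_stone_like_general (.inl ⟨bX, hbX_mem, hbX_nonneg, hbX_ne, hbX_supp⟩))
end

section
/- Let X, Y, E be Banach spaces and T : Y → X a limited bounded linear operator, i.e., for every sequence (pₙ) in the dual X* converging to 0 in the weak-* topology, ‖pₙ ∘ T‖ → 0. Suppose q : X → E is a d.c. mapping with a control function g that is Fréchet differentiable at 0, q(0) = 0, and B_E(0, t) ⊆ (q ∘ T)(B_Y(0, t)) for all t > 0. Then E is finite dimensional. -/
open Filter Metric Topology

/-!
For a weak-* null sequence `eₙ` in `E*`, approximate subgradients `pₙ` of `eₙ ∘ q + g` at `0`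
converge weak-* to the derivative `L` of `g`, so `‖(pₙ - L) ∘ T‖ → 0` because `T` is limited.
For small `t` and large `n` the subgradient inequality bounds `eₙ ∘ q ∘ T` from below by a small
multiple of `-t` on the ball of radius `t`, and cosurjectivity turns this into `‖eₙ‖ → 0`. So the
identity of `E` is limited, and the Josefson–Nissenzweig theorem says that `E` is finite
dimensional.

The Josefson–Nissenzweig theorem is proved by the method of Hagler and Johnson. A bounded sequence
in the dual has a convex block sequence `w` whose oscillation on the unit ball is minimal among all
its convex block sequences. If this minimum is positive, then for finitely many infinite sets of
indices there is a single `x` such that, in each of them, infinitely many values `w k x` lie above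
a gap of fixed size and infinitely many lie below it.
This grows a dyadic tree of index sets, and Rademacher averages of `w` along its branches form a
weak-* null sequence which does not tend to `0` in norm. When the identity is limited, the minimum
is thus `0`, and every bounded sequence in the dual has a norm convergent convex block sequence.
In infinite dimensions this fails for a normalized sequence that tends to `0` pointwise on a set
norming its span: the limits of the convex blocks would be `0`, the sequence would be weak-* null
and hence norm null.
-/

section Preorder

open scoped ENNReal

-- Brézis–Browder ordering principle.
theorem exists_rel_forall_rel_le {α : Type*} {r : α → α → Prop} [IsPreorder α r] {φ : α → ℝ≥0∞}
    (hφ : ∀ a b, r a b → φ b ≤ φ a)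
    (hr : ∀ u : ℕ → α, (∀ n, r (u n) (u (n + 1))) → ∃ b, ∀ n, r (u n) b) (a : α) :
    ∃ b, r a b ∧ ∀ c, r b c → φ b ≤ φ c := by
  have exists_almost_min (n : ℕ) (a : α) :
      ∃ b, r a b ∧ ∀ c, r b c → φ b ≤ φ c + (n : ℝ≥0∞)⁻¹ := by
    by_cases htop : ⨅ c, ⨅ _ : r a c, φ c = ⊤
    · refine ⟨a, refl a, fun c hac => ?_⟩
      simp only [iInf_eq_top] at htop
      simp [htop c hac]
    · obtain ⟨b, hb⟩ := iInf_lt_iff.1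
        (ENNReal.lt_add_right htop (ENNReal.inv_ne_zero.2 (ENNReal.natCast_ne_top n)))
      obtain ⟨hab, hb⟩ := iInf_lt_iff.1 hb
      refine ⟨b, hab, fun c hbc => hb.le.trans ?_⟩
      gcongr
      exact iInf₂_le c (_root_.trans hab hbc)
  choose next hnext hmin using exists_almost_min
  let u : ℕ → α := fun n => Nat.rec a next n
  have hu (n : ℕ) : r (u n) (u (n + 1)) := hnext n (u n)
  obtain ⟨b, hb⟩ := hr u hu
  refine ⟨b, hb 0, fun c hbc => ENNReal.le_of_forall_pos_le_add fun ε hε _ => ?_⟩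
  obtain ⟨n, hn⟩ := ENNReal.exists_inv_nat_lt (ENNReal.coe_ne_zero.2 hε.ne')
  calc φ b ≤ φ (u (n + 1)) := hφ _ _ (hb (n + 1))
    _ ≤ φ c + (n : ℝ≥0∞)⁻¹ := hmin n (u n) c (_root_.trans (hb (n + 1)) hbc)
    _ ≤ φ c + ε := by gcongr

end Preorder

section ConvexBlock

variable {V W : Type*} [AddCommGroup V] [Module ℝ V] [AddCommGroup W] [Module ℝ W]

/-- `v` is a convex block sequence of `u`: eventually, `v k` is a convex combination of
finitely many terms of the tail `u k, u (k + 1), …`. Leaving out finitely many `k` makes countable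
chains of successive convex block sequences bounded. -/
def IsConvexBlock (u v : ℕ → V) : Prop :=
  ∀ᶠ k in atTop, v k ∈ convexHull ℝ (u '' Set.Ici k)

namespace IsConvexBlock

variable {u v w : ℕ → V}

protected theorem refl (u : ℕ → V) : IsConvexBlock u u :=
  .of_forall fun _ => subset_convexHull ℝ _ (Set.mem_image_of_mem u Set.self_mem_Ici)

protected theorem trans (huv : IsConvexBlock u v) (hvw : IsConvexBlock v w) :
    IsConvexBlock u w := by
  obtain ⟨K, hK⟩ := eventually_atTop.1 huv
  filter_upwards [hvw, eventually_ge_atTop K] with k hk hKk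
  refine convexHull_min ?_ (convex_convexHull ℝ _) hk
  rintro - ⟨j, hj, rfl⟩
  exact convexHull_mono (Set.image_mono (Set.Ici_subset_Ici.2 hj)) (hK j (hKk.trans hj))

instance : IsPreorder (ℕ → V) IsConvexBlock where
  refl := IsConvexBlock.refl
  trans _ _ _ := IsConvexBlock.trans

theorem map (h : IsConvexBlock u v) (f : V →ₗ[ℝ] W) : IsConvexBlock (f ∘ u) (f ∘ v) := by
  filter_upwards [h] with k hk
  rw [Set.image_comp, ← f.image_convexHull]
  exact Set.mem_image_of_mem f hk

theorem eventually_mem (h : IsConvexBlock u v) {s : Set V} (hs : Convex ℝ s)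
    (hu : ∀ᶠ k in atTop, u k ∈ s) : ∀ᶠ k in atTop, v k ∈ s := by
  obtain ⟨K, hK⟩ := eventually_atTop.1 hu
  filter_upwards [h, eventually_ge_atTop K] with k hk hKk
  refine convexHull_min ?_ hs hk
  rintro - ⟨j, hj, rfl⟩
  exact hK j (hKk.trans hj)

theorem exists_forall_of_forall_succ {u : ℕ → ℕ → V}
    (h : ∀ n, IsConvexBlock (u n) (u (n + 1))) : ∃ v, ∀ n, IsConvexBlock (u n) v := by
  have hu {m n : ℕ} (hmn : m ≤ n) : IsConvexBlock (u m) (u n) :=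
    Nat.rel_of_forall_rel_succ_of_le IsConvexBlock h hmn
  have (n : ℕ) : ∃ k ≥ n, ∀ m ≤ n, u n k ∈ convexHull ℝ (u m '' Set.Ici k) :=
    ((eventually_ge_atTop n).and
      ((Set.finite_Iic n).eventually_all.2 fun _ hm => hu hm)).exists
  choose k hk hku using this
  refine ⟨fun n => u n (k n), fun m => ?_⟩
  filter_upwards [eventually_ge_atTop m] with n hmn
  exact convexHull_mono (Set.image_mono (Set.Ici_subset_Ici.2 (hk n))) (hku n m hmn)

theorem tendsto {E : Type*} [SeminormedAddCommGroup E] [NormedSpace ℝ E] {u v : ℕ → E}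
    (h : IsConvexBlock u v) {l : E} (hu : Tendsto u atTop (𝓝 l)) : Tendsto v atTop (𝓝 l) :=
  Metric.tendsto_nhds.2 fun ε hε =>
    h.eventually_mem (convex_ball l ε) (hu.eventually (ball_mem_nhds l hε))

end IsConvexBlock

end ConvexBlock

section Oscillation

open scoped ENNReal

/-- The asymptotic oscillation of a sequence: the infimum of the diameters of its tails. -/
noncomputable def asymptoticOsc {α : Type*} [PseudoEMetricSpace α] (a : ℕ → α) : ℝ≥0∞ :=
  ⨅ N, ediam (a '' Set.Ici N)

theorem cauchySeq_of_asymptoticOsc_eq_zero {α : Type*} [PseudoEMetricSpace α] {a : ℕ → α}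
    (h : asymptoticOsc a = 0) : CauchySeq a := by
  refine EMetric.cauchySeq_iff.2 fun ε hε => ?_
  obtain ⟨N, hN⟩ := iInf_lt_iff.1 (h.trans_lt hε)
  exact ⟨N, fun m hm n hn => (edist_le_ediam_of_mem (Set.mem_image_of_mem a hm)
    (Set.mem_image_of_mem a hn)).trans_lt hN⟩

theorem IsConvexBlock.asymptoticOsc_le {E : Type*} [SeminormedAddCommGroup E] [NormedSpace ℝ E]
    {u v : ℕ → E} (h : IsConvexBlock u v) : asymptoticOsc v ≤ asymptoticOsc u := by
  refine le_iInf fun N => ?_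
  obtain ⟨K, hK⟩ := eventually_atTop.1 (h.eventually_mem (convex_convexHull ℝ (u '' Set.Ici N))
    ((eventually_ge_atTop N).mono fun k hk => subset_convexHull ℝ _ (Set.mem_image_of_mem u hk)))
  calc asymptoticOsc v ≤ ediam (v '' Set.Ici K) := iInf_le _ K
    _ ≤ ediam (convexHull ℝ (u '' Set.Ici N)) := ediam_mono (Set.image_subset_iff.2 hK)
    _ = ediam (u '' Set.Ici N) := convexHull_ediam _

variable {X : Type*} [SeminormedAddCommGroup X] [NormedSpace ℝ X]

/-- The supremum of the asymptotic oscillations of `k ↦ u k x` over the closed unit ball. It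
measures how far the sequence of functionals `u` is from being weak-* Cauchy. -/
noncomputable def weakStarOsc (u : ℕ → StrongDual ℝ X) : ℝ≥0∞ :=
  ⨆ x ∈ closedBall (0 : X) 1, asymptoticOsc fun k => u k x

theorem asymptoticOsc_apply_le_weakStarOsc (u : ℕ → StrongDual ℝ X) {x : X}
    (hx : x ∈ closedBall (0 : X) 1) : asymptoticOsc (fun k => u k x) ≤ weakStarOsc u :=
  le_iSup₂ (f := fun x _ => asymptoticOsc fun k => u k x) x hx

theorem IsConvexBlock.apply {u v : ℕ → StrongDual ℝ X} (h : IsConvexBlock u v) (x : X) :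
    IsConvexBlock (fun k => u k x) (fun k => v k x) :=
  h.map (ContinuousLinearMap.apply ℝ ℝ x).toLinearMap

theorem IsConvexBlock.weakStarOsc_le {u v : ℕ → StrongDual ℝ X} (h : IsConvexBlock u v) :
    weakStarOsc v ≤ weakStarOsc u :=
  iSup₂_mono fun x _ => (h.apply x).asymptoticOsc_le

theorem exists_isConvexBlock_forall_weakStarOsc_le (u : ℕ → StrongDual ℝ X) :
    ∃ w, IsConvexBlock u w ∧ ∀ v, IsConvexBlock w v → weakStarOsc w ≤ weakStarOsc v :=
  exists_rel_forall_rel_le (fun _ _ h => h.weakStarOsc_le)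
    (fun _ => IsConvexBlock.exists_forall_of_forall_succ) u

theorem weakStarOsc_ne_top {u : ℕ → StrongDual ℝ X} {C : ℝ} (hu : ∀ᶠ k in atTop, ‖u k‖ ≤ C) :
    weakStarOsc u ≠ ⊤ := by
  obtain ⟨N, hN⟩ := eventually_atTop.1 hu
  refine ne_top_of_le_ne_top (ENNReal.ofReal_ne_top (r := C + C)) (iSup₂_le fun x hx => ?_)
  have hx1 : ‖x‖ ≤ 1 := mem_closedBall_zero_iff.1 hx
  have bound (k : ℕ) (hk : N ≤ k) : ‖u k x‖ ≤ C := by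
    simpa using (u k).le_of_opNorm_le_of_le (hN k hk) hx1
  refine (iInf_le _ N).trans (ediam_image_le_iff.2 fun i hi j hj => ?_)
  rw [edist_dist]
  exact ENNReal.ofReal_le_ofReal
    ((dist_le_norm_add_norm _ _).trans (add_le_add (bound i hi) (bound j hj)))

theorem cauchySeq_apply_of_weakStarOsc_eq_zero {u : ℕ → StrongDual ℝ X} (h : weakStarOsc u = 0)
    (x : X) : CauchySeq fun k => u k x := by
  have hr : 0 < ‖x‖ + 1 := by positivity
  have hx : (‖x‖ + 1)⁻¹ • x ∈ closedBall (0 : X) 1 := by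
    rw [mem_closedBall_zero_iff, norm_smul, norm_inv, Real.norm_of_nonneg hr.le,
      inv_mul_le_one₀ hr]
    exact le_add_of_nonneg_right zero_le_one
  have hosc : asymptoticOsc (fun k => u k ((‖x‖ + 1)⁻¹ • x)) = 0 :=
    le_zero_iff.1 (h ▸ asymptoticOsc_apply_le_weakStarOsc u hx)
  have := (uniformContinuous_const_smul (‖x‖ + 1)).comp_cauchySeq
    (cauchySeq_of_asymptoticOsc_eq_zero hosc)
  simpa only [Function.comp_def, map_smul, smul_inv_smul₀ hr.ne'] using this

end Oscillation

section Splitting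

theorem sub_card_mul_le_of_forall_le {ι : Type*} [Fintype ι] {f : ι → ℝ} {a b : ℝ}
    (hf : ∀ i, f i ≤ b) (hsum : Fintype.card ι * a ≤ ∑ i, f i) (i : ι) :
    b - Fintype.card ι * (b - a) ≤ f i := by
  have h : b - f i ≤ ∑ j, (b - f j) :=
    Finset.single_le_sum (f := fun j => b - f j) (fun j _ => sub_nonneg.2 (hf j))
      (Finset.mem_univ i)
  rw [Finset.sum_sub_distrib, Finset.sum_const, nsmul_eq_mul, Finset.card_univ] at h
  linarith

theorem exists_forall_abs_sub_le_of_ediam_le {s : Set ℝ} {ρ : ℝ} (hρ : 0 ≤ ρ)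
    (hs : ediam s ≤ ENNReal.ofReal (2 * ρ)) : ∃ L, ∀ a ∈ s, |a - L| ≤ ρ := by
  have hb : Bornology.IsBounded s :=
    isBounded_iff_ediam_ne_top.2 (ne_top_of_le_ne_top ENNReal.ofReal_ne_top hs)
  rw [Real.ediam_eq hb, ENNReal.ofReal_le_ofReal_iff (by positivity)] at hs
  refine ⟨(sSup s + sInf s) / 2, fun a ha => abs_sub_le_iff.2 ⟨?_, ?_⟩⟩
  · linarith [le_csSup hb.bddAbove ha]
  · linarith [csInf_le hb.bddBelow ha]

theorem exists_lt_sub_of_lt_asymptoticOsc {a : ℕ → ℝ} {ρ : ℝ}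
    (h : ENNReal.ofReal ρ < asymptoticOsc a) (N : ℕ) : ∃ i ≥ N, ∃ j ≥ N, ρ < a i - a j := by
  by_contra! hle
  refine (h.trans_le (iInf_le _ N)).not_ge (ediam_image_le_iff.2 fun i hi j hj => ?_)
  rw [edist_dist]
  refine ENNReal.ofReal_le_ofReal ?_
  rw [Real.dist_eq]
  exact abs_sub_le_iff.2 ⟨hle i hi j hj, hle j hj i hi⟩

theorem exists_sub_le_of_asymptoticOsc_lt {a : ℕ → ℝ} {ρ : ℝ}
    (h : asymptoticOsc a < ENNReal.ofReal ρ) : ∃ N, ∀ i ≥ N, ∀ j ≥ N, a i - a j ≤ ρ := by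
  obtain ⟨N, hN⟩ := iInf_lt_iff.1 h
  refine ⟨N, fun i hi j hj => (le_abs_self _).trans ?_⟩
  have := (ediam_image_le_iff.1 hN.le) i hi j hj
  rwa [edist_dist, Real.dist_eq, ENNReal.ofReal_le_ofReal_iff
    (ENNReal.ofReal_pos.1 (pos_of_gt h)).le] at this

variable {X : Type*} [SeminormedAddCommGroup X] [NormedSpace ℝ X]

-- Averaging one subsequence per `D m` yields a convex block, which oscillates by almost `δ` at some
-- `x`. As no subsequence oscillates by much more than `δ` at `x`, none can oscillate by much less.
theorem exists_forall_exists_le_apply_sub {w : ℕ → StrongDual ℝ X} {δ ρ : ℝ} (hδ : 0 < δ)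
    (hρ : ρ < δ) (hw : weakStarOsc w = ENNReal.ofReal δ)
    (hmin : ∀ v, IsConvexBlock w v → weakStarOsc w ≤ weakStarOsc v) {ι : Type*} [Finite ι]
    {D : ι → Set ℕ} (hD : ∀ m, (D m).Infinite) :
    ∃ x ∈ closedBall (0 : X) 1, ∀ m n, ∃ i ∈ D m, ∃ j ∈ D m, n ≤ i ∧ n ≤ j ∧
      ρ ≤ w i x - w j x := by
  have := Fintype.ofFinite ι
  cases isEmpty_or_nonempty ι
  · exact ⟨0, by simp, isEmptyElim⟩
  have hcard : (0 : ℝ) < Fintype.card ι := by exact_mod_cast Fintype.card_pos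
  choose e heD hei using fun m n => ((hD m).exists_gt n).imp fun k hk => And.imp_right le_of_lt hk
  let v : ℕ → StrongDual ℝ X := fun k => ∑ m, (Fintype.card ι : ℝ)⁻¹ • w (e m k)
  have hv : IsConvexBlock w v := .of_forall fun k =>
    (convex_convexHull ℝ _).sum_mem (fun _ _ => by positivity) (by simp [hcard.ne'])
      fun m _ => subset_convexHull ℝ _ (Set.mem_image_of_mem w (hei m k))
  set η : ℝ := (δ - ρ) / (2 * Fintype.card ι) with hη_def
  have hη : 0 < η := div_pos (sub_pos.2 hρ) (by positivity)
  have hlt : ENNReal.ofReal (δ - η) < weakStarOsc v :=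
    ((ENNReal.ofReal_lt_ofReal_iff hδ).2 (sub_lt_self δ hη)).trans_le (hw ▸ hmin v hv)
  simp only [weakStarOsc, lt_iSup_iff] at hlt
  obtain ⟨x, hx, hvx⟩ := hlt
  have hwx : asymptoticOsc (fun k => w k x) < ENNReal.ofReal (δ + η) :=
    (hw ▸ asymptoticOsc_apply_le_weakStarOsc w hx).trans_lt
      ((ENNReal.ofReal_lt_ofReal_iff (by positivity)).2 (lt_add_of_pos_right δ hη))
  obtain ⟨N, hN⟩ := exists_sub_le_of_asymptoticOsc_lt hwx
  refine ⟨x, hx, fun m n => ?_⟩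
  obtain ⟨i, hi, j, hj, hij⟩ := exists_lt_sub_of_lt_asymptoticOsc hvx (max n N)
  rw [ge_iff_le, max_le_iff] at hi hj
  refine ⟨e m i, heD m i, e m j, heD m j, hi.1.trans (hei m i), hj.1.trans (hei m j), ?_⟩
  have hsum : Fintype.card ι * (δ - η) ≤ ∑ m, (w (e m i) x - w (e m j) x) := by
    rw [← le_inv_mul_iff₀ hcard, Finset.sum_sub_distrib, mul_sub]
    simpa [v, Finset.mul_sum] using hij.le
  have := sub_card_mul_le_of_forall_le
    (fun m => hN _ (hi.2.trans (hei m i)) _ (hj.2.trans (hei m j))) hsum m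
  have hη_card : Fintype.card ι * (δ + η - (δ - η)) = δ - ρ := by
    rw [hη_def]; field_simp; ring
  linarith

theorem exists_infinite_inter_setOf_le {w : ℕ → StrongDual ℝ X} {δ : ℝ} (hδ : 0 < δ)
    (hw : weakStarOsc w = ENNReal.ofReal δ)
    (hmin : ∀ v, IsConvexBlock w v → weakStarOsc w ≤ weakStarOsc v) {ι : Type*} [Finite ι]
    {D : ι → Set ℕ} (hD : ∀ m, (D m).Infinite) :
    ∃ x ∈ closedBall (0 : X) 1, ∃ L : ℝ, ∀ m (ε : ℤˣ),
      (D m ∩ {k | δ / 8 ≤ ε • (w k x - L)}).Infinite := by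
  obtain ⟨x, hx, hsub⟩ :=
    exists_forall_exists_le_apply_sub hδ (by linarith : 3 / 4 * δ < δ) hw hmin hD
  have hwx : asymptoticOsc (fun k => w k x) < ENNReal.ofReal (2 * (9 / 16 * δ)) :=
    (hw ▸ asymptoticOsc_apply_le_weakStarOsc w hx).trans_lt
      ((ENNReal.ofReal_lt_ofReal_iff (by positivity)).2 (by linarith))
  obtain ⟨N, hN⟩ := iInf_lt_iff.1 hwx
  obtain ⟨L, hL⟩ := exists_forall_abs_sub_le_of_ediam_le (by positivity) hN.le
  refine ⟨x, hx, L, fun m ε => Set.infinite_of_forall_exists_gt fun n => ?_⟩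
  obtain ⟨i, hi, j, hj, hni, hnj, hij⟩ := hsub m (max (n + 1) N)
  rw [max_le_iff] at hni hnj
  have hLi := (abs_le.1 (hL _ (Set.mem_image_of_mem _ hni.2))).2
  have hLj := (abs_le.1 (hL _ (Set.mem_image_of_mem _ hnj.2))).1
  obtain rfl | rfl := Int.units_eq_one_or ε
  · refine ⟨i, ⟨hi, ?_⟩, hni.1⟩
    rw [Set.mem_ofPred_eq, one_smul]
    linarith
  · refine ⟨j, ⟨hj, ?_⟩, hnj.1⟩
    rw [Set.mem_ofPred_eq, Units.neg_smul, one_smul]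
    linarith

end Splitting

section Tree

theorem exists_seq_forall_infinite_iInter {C B S : Type*} [Infinite S] [Finite B]
    (A : C → B → Set S)
    (h : ∀ 𝒟 : Finset (Set S), (∀ D ∈ 𝒟, D.Infinite) →
      ∃ c, ∀ D ∈ 𝒟, ∀ b, (D ∩ A c b).Infinite) :
    ∃ c : ℕ → C, ∀ N (σ : Fin N → B), (⋂ i : Fin N, A (c i) (σ i)).Infinite := by
  classical
  have := Fintype.ofFinite B
  have : Nonempty C := (h ∅ (by simp)).nonempty
  choose! c hc using h
  let next (𝒟 : Finset (Set S)) : Finset (Set S) :=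
    (𝒟 ×ˢ Finset.univ).image fun p : Set S × B => p.1 ∩ A (c 𝒟) p.2
  let family (N : ℕ) : Finset (Set S) := next^[N] {Set.univ}
  have family_succ (N : ℕ) : family (N + 1) = next (family N) :=
    Function.iterate_succ_apply' ..
  have infinite (N : ℕ) : ∀ D ∈ family N, D.Infinite := by
    induction N with
    | zero => simpa [family] using Set.infinite_univ
    | succ N ih =>
      simp only [family_succ, next, Finset.forall_mem_image, Finset.mem_product]
      exact fun p hp => hc _ ih p.1 hp.1 p.2
  have cell_mem (N : ℕ) (σ : Fin N → B) : ⋂ i : Fin N, A (c (family i)) (σ i) ∈ family N := by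
    induction N with
    | zero => simp [family]
    | succ N ih =>
      rw [family_succ]
      refine Finset.mem_image.2 ⟨(_, σ (Fin.last N)), Finset.mem_product.2
        ⟨ih fun i => σ i.castSucc, Finset.mem_univ _⟩, ?_⟩
      ext s
      simp [Fin.forall_fin_succ']
  exact ⟨fun n => c (family n), fun N σ => infinite N _ (cell_mem N σ)⟩

end Tree

section Rademacher

variable {ι : Type*} [Fintype ι]

/-- The coordinate functions `ε ↦ ε i` on the cube `{±1}^ι`, normalized in `ℓ²`. -/
noncomputable def rademacher (i : ι) : EuclideanSpace ℝ (ι → ℤˣ) :=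
  WithLp.toLp 2 fun ε => ε i • (√(2 ^ Fintype.card ι))⁻¹

variable [DecidableEq ι]

theorem sum_smul_eq_zero_of_mulSingle_mul {M : Type*} [AddCommGroup M] [IsAddTorsionFree M] {i : ι}
    {f : (ι → ℤˣ) → M} (hf : ∀ ε, f (Pi.mulSingle i (-1) * ε) = f ε) :
    ∑ ε : ι → ℤˣ, ε i • f ε = 0 := by
  have h : ∑ ε : ι → ℤˣ, ε i • f ε = ∑ ε : ι → ℤˣ, -(ε i • f ε) :=
    Fintype.sum_equiv (Equiv.mulLeft (Pi.mulSingle i (-1))) _ _ fun ε => by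
      simp [hf, Units.neg_smul]
  rw [Finset.sum_neg_distrib] at h
  exact self_eq_neg.1 h

theorem orthonormal_rademacher : Orthonormal ℝ (rademacher (ι := ι)) := by
  refine ⟨fun i => ?_, fun i j hij => ?_⟩
  · rw [EuclideanSpace.norm_eq, Real.sqrt_eq_one]
    simp [rademacher]
  · simp only [PiLp.inner_apply, rademacher, RCLike.inner_apply, conj_trivial, mul_smul_comm]
    refine sum_smul_eq_zero_of_mulSingle_mul fun ε => ?_
    simp [hij]

theorem sum_sq_average_units_smul_le {f : (ι → ℤˣ) → ℝ} {C : ℝ} (hf : ∀ ε, |f ε| ≤ C) :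
    ∑ i, ((2 ^ Fintype.card ι)⁻¹ * ∑ ε : ι → ℤˣ, ε i • f ε) ^ 2 ≤ C ^ 2 := by
  have bessel := orthonormal_rademacher.sum_inner_products_le (s := Finset.univ) (WithLp.toLp 2 f)
  have hinner (i : ι) : inner ℝ (rademacher i) (WithLp.toLp 2 f) =
      (√(2 ^ Fintype.card ι))⁻¹ * ∑ ε : ι → ℤˣ, ε i • f ε := by
    simp only [PiLp.inner_apply, rademacher, RCLike.inner_apply, conj_trivial, mul_smul_comm,
      Finset.mul_sum, mul_comm, smul_mul_assoc]
  simp only [hinner, Real.norm_eq_abs, sq_abs, EuclideanSpace.norm_sq_eq] at bessel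
  have hnorm : ∑ ε, f ε ^ 2 ≤ 2 ^ Fintype.card ι * C ^ 2 := by
    simpa using
      Finset.sum_le_card_nsmul Finset.univ _ _ fun ε _ => sq_le_sq.2 ((hf ε).trans (le_abs_self C))
  calc ∑ i, ((2 ^ Fintype.card ι)⁻¹ * ∑ ε : ι → ℤˣ, ε i • f ε) ^ 2
      = (2 ^ Fintype.card ι)⁻¹ *
          ∑ i, ((√(2 ^ Fintype.card ι))⁻¹ * ∑ ε : ι → ℤˣ, ε i • f ε) ^ 2 := by
        rw [Finset.mul_sum]
        refine Finset.sum_congr rfl fun i _ => ?_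
        rw [mul_pow, mul_pow, inv_pow (√_), Real.sq_sqrt (by positivity), sq (_)⁻¹, mul_assoc]
    _ ≤ (2 ^ Fintype.card ι)⁻¹ * (2 ^ Fintype.card ι * C ^ 2) := by
        gcongr
        exact bessel.trans hnorm
    _ = C ^ 2 := inv_mul_cancel_left₀ (by positivity) _

end Rademacher

section SquareSums

variable {ι : Type*} [Fintype ι] {X : Type*} [SeminormedAddCommGroup X] [NormedSpace ℝ X]

theorem exists_sum_sq_le_of_forall_units {C d : ℝ} {x : ι → X} {L : ι → ℝ}
    {φ : (ι → ℤˣ) → StrongDual ℝ X} (hφ : ∀ ε, ‖φ ε‖ ≤ C)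
    (hd : ∀ ε i, d ≤ ε i • (φ ε (x i) - L i)) :
    ∃ p : ι → StrongDual ℝ X, (∀ y, ∑ i, p i y ^ 2 ≤ (C * ‖y‖) ^ 2) ∧ ∀ i, d ≤ p i (x i) := by
  classical
  have apply_eq (i : ι) (y : X) :
      ((2 ^ Fintype.card ι : ℝ)⁻¹ • ∑ ε : ι → ℤˣ, ε i • φ ε) y =
        (2 ^ Fintype.card ι : ℝ)⁻¹ * ∑ ε : ι → ℤˣ, ε i • φ ε y := by
    simp
  refine ⟨fun i => (2 ^ Fintype.card ι : ℝ)⁻¹ • ∑ ε : ι → ℤˣ, ε i • φ ε,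
    fun y => ?_, fun i => ?_⟩
  · simp only [apply_eq]
    exact sum_sq_average_units_smul_le fun ε => (φ ε).le_of_opNorm_le (hφ ε) y
  · have hL : ∑ ε : ι → ℤˣ, ε i • L i = 0 := sum_smul_eq_zero_of_mulSingle_mul fun _ => rfl
    rw [apply_eq, le_inv_mul_iff₀ (by positivity)]
    calc _ = ∑ _ε : ι → ℤˣ, d := by simp
      _ ≤ ∑ ε : ι → ℤˣ, ε i • (φ ε (x i) - L i) := Finset.sum_le_sum fun ε _ => hd ε i
      _ = ∑ ε : ι → ℤˣ, ε i • φ ε (x i) := by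
        simp only [smul_sub, Finset.sum_sub_distrib, hL, sub_zero]

theorem norm_le_abs_of_sum_sq_apply_le {C : ℝ} {p : ι → StrongDual ℝ X}
    (hp : ∀ y, ∑ i, p i y ^ 2 ≤ (C * ‖y‖) ^ 2) (i : ι) : ‖p i‖ ≤ |C| := by
  refine (p i).opNorm_le_bound (abs_nonneg C) fun y => ?_
  rw [← abs_norm y, ← abs_mul, Real.norm_eq_abs, ← sq_le_sq]
  exact (Finset.single_le_sum (f := fun i => p i y ^ 2) (fun i _ => sq_nonneg _)
    (Finset.mem_univ i)).trans (hp y)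

theorem exists_seq_sum_sq_le_of_forall_fin {C d : ℝ} {x : ℕ → X}
    (h : ∀ N, ∃ p : Fin N → StrongDual ℝ X,
      (∀ y, ∑ i, p i y ^ 2 ≤ (C * ‖y‖) ^ 2) ∧ ∀ i, d ≤ p i (x i)) :
    ∃ p : ℕ → StrongDual ℝ X,
      (∀ y N, ∑ i ∈ Finset.range N, p i y ^ 2 ≤ (C * ‖y‖) ^ 2) ∧ ∀ i, d ≤ p i (x i) := by
  let B : Set (WeakDual ℝ X) := WeakDual.toStrongDual ⁻¹' closedBall 0 |C|
  let K (N : ℕ) : Set (ℕ → WeakDual ℝ X) :=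
    {P | (∀ n, P n ∈ B) ∧ (∀ y, ∑ i ∈ Finset.range N, P i y ^ 2 ≤ (C * ‖y‖) ^ 2) ∧
      ∀ n < N, d ≤ P n (x n)}
  have hB : IsCompact B := WeakDual.isCompact_closedBall 0 |C|
  have eval_continuous (n : ℕ) (y : X) : Continuous fun P : ℕ → WeakDual ℝ X => P n y :=
    (WeakDual.eval_continuous y).comp (continuous_apply n)
  have hK_closed (N : ℕ) : IsClosed (K N) := by
    simp only [K, Set.ofPred_and, Set.ofPred_forall]
    refine .inter (isClosed_iInter fun n => hB.isClosed.preimage (continuous_apply n))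
      (.inter (isClosed_iInter fun y => isClosed_le ?_ continuous_const)
        (isClosed_iInter fun n => isClosed_iInter fun _ =>
          isClosed_le continuous_const (eval_continuous n (x n))))
    exact continuous_finsetSum _ fun n _ => (eval_continuous n y).pow 2
  have hK_compact : IsCompact (K 0) :=
    (isCompact_univ_pi fun _ => hB).of_isClosed_subset (hK_closed 0) fun P hP n _ => hP.1 n
  have hK_anti (N : ℕ) : K (N + 1) ⊆ K N := fun P hP =>
    ⟨hP.1, fun y => (Finset.sum_le_sum_of_subset_of_nonneg
      (Finset.range_subset_range.2 N.le_succ) fun _ _ _ => sq_nonneg _).trans (hP.2.1 y),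
      fun n hn => hP.2.2 n (hn.trans N.lt_succ_self)⟩
  have hK_nonempty (N : ℕ) : (K N).Nonempty := by
    obtain ⟨p, hp, hpx⟩ := h N
    refine ⟨fun n => if hn : n < N then StrongDual.toWeakDual (p ⟨n, hn⟩) else 0,
      fun n => ?_, fun y => ?_, fun n hn => ?_⟩
    · by_cases hn : n < N
      · simpa [B, hn] using norm_le_abs_of_sum_sq_apply_le hp ⟨n, hn⟩
      · simp [B, hn]
    · simpa [Finset.sum_range] using hp y
    · simpa [hn] using hpx ⟨n, hn⟩
  obtain ⟨P, hP⟩ := IsCompact.nonempty_iInter_of_sequence_nonempty_isCompact_isClosed K hK_anti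
    hK_nonempty hK_compact hK_closed
  rw [Set.mem_iInter] at hP
  exact ⟨fun n => WeakDual.toStrongDual (P n), fun y N => (hP N).2.1 y,
    fun i => (hP (i + 1)).2.2 i i.lt_succ_self⟩

end SquareSums

section Limited

/-- A limited operator: one whose adjoint maps weak-* null sequences to norm null sequences. -/
def IsLimitedOperator {X Y : Type*} [SeminormedAddCommGroup X] [NormedSpace ℝ X]
    [SeminormedAddCommGroup Y] [NormedSpace ℝ Y] (T : Y →L[ℝ] X) : Prop :=
  ∀ p : ℕ → X →L[ℝ] ℝ, (∀ x : X, Tendsto (fun n => p n x) atTop (𝓝 0)) →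
    Tendsto (fun n => ‖(p n).comp T‖) atTop (𝓝 0)

variable {X Y : Type*} [SeminormedAddCommGroup X] [NormedSpace ℝ X]
  [SeminormedAddCommGroup Y] [NormedSpace ℝ Y]

theorem IsLimitedOperator.cauchySeq_comp {T : Y →L[ℝ] X} (hT : IsLimitedOperator T)
    {w : ℕ → StrongDual ℝ X} (hw : ∀ x, CauchySeq fun n => w n x) :
    CauchySeq fun n => (w n).comp T := by
  refine cauchySeq_iff_tendsto_dist_atTop_0.2 (tendsto_of_seq_tendsto fun k hk => ?_)
  have hdiff (x : X) : Tendsto (fun n => (w (k n).1 - w (k n).2) x) atTop (𝓝 0) :=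
    tendsto_zero_iff_norm_tendsto_zero.2 <| by
      simpa [Function.comp_def, dist_eq_norm] using
        (cauchySeq_iff_tendsto_dist_atTop_0.1 (hw x)).comp hk
  simpa [dist_eq_norm, ContinuousLinearMap.sub_comp, Function.comp_def] using hT _ hdiff

theorem exists_tendsto_zero_le_apply_of_weakStarOsc_minimal {w : ℕ → StrongDual ℝ X} {δ C : ℝ}
    (hδ : 0 < δ) (hw : weakStarOsc w = ENNReal.ofReal δ)
    (hmin : ∀ v, IsConvexBlock w v → weakStarOsc w ≤ weakStarOsc v)
    (hC : ∀ᶠ k in atTop, ‖w k‖ ≤ C) :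
    ∃ (p : ℕ → StrongDual ℝ X) (x : ℕ → X), (∀ y, Tendsto (fun n => p n y) atTop (𝓝 0)) ∧
      (∀ n, ‖x n‖ ≤ 1) ∧ ∀ n, δ / 8 ≤ p n (x n) := by
  obtain ⟨K, hK⟩ := eventually_atTop.1 hC
  obtain ⟨c, hc⟩ := exists_seq_forall_infinite_iInter
    (fun (c : closedBall (0 : X) 1 × ℝ) (ε : ℤˣ) => {k | δ / 8 ≤ ε • (w k c.1 - c.2)})
    fun 𝒟 h𝒟 => by
      obtain ⟨x, hx, L, hL⟩ :=
        exists_infinite_inter_setOf_le hδ hw hmin (D := ((↑) : 𝒟 → Set ℕ)) fun D => h𝒟 D D.2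
      exact ⟨⟨⟨x, hx⟩, L⟩, fun D hD => hL ⟨D, hD⟩⟩
  have hfin (N : ℕ) : ∃ p : Fin N → StrongDual ℝ X,
      (∀ y, ∑ i, p i y ^ 2 ≤ (C * ‖y‖) ^ 2) ∧ ∀ i, δ / 8 ≤ p i (c i).1 := by
    choose k hk hKk using fun ε : Fin N → ℤˣ => (hc N ε).exists_gt K
    exact exists_sum_sq_le_of_forall_units (fun ε => hK _ (hKk ε).le)
      fun ε i => Set.mem_iInter.1 (hk ε) i
  obtain ⟨p, hp, hpx⟩ := exists_seq_sum_sq_le_of_forall_fin (x := fun n => ((c n).1 : X)) hfin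
  refine ⟨p, fun n => (c n).1, fun y => ?_,
    fun n => mem_closedBall_zero_iff.1 (c n).1.2, hpx⟩
  have hsq : Tendsto (fun n => p n y ^ 2) atTop (𝓝 0) :=
    (summable_of_sum_range_le (fun n => sq_nonneg _) (hp y)).tendsto_atTop_zero
  exact (tendsto_zero_iff_abs_tendsto_zero _).2
    (by simpa [Real.sqrt_sq_eq_abs, Function.comp_def] using hsq.sqrt)

theorem exists_isConvexBlock_weakStarOsc_eq_zero (hX : IsLimitedOperator (.id ℝ X))
    {u : ℕ → StrongDual ℝ X} {C : ℝ} (hu : ∀ k, ‖u k‖ ≤ C) :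
    ∃ w, IsConvexBlock u w ∧ weakStarOsc w = 0 := by
  obtain ⟨w, huw, hmin⟩ := exists_isConvexBlock_forall_weakStarOsc_le u
  refine ⟨w, huw, by_contra fun hne => ?_⟩
  have hC : ∀ᶠ k in atTop, ‖w k‖ ≤ C := by
    simpa using huw.eventually_mem (convex_closedBall 0 C) (.of_forall (by simpa using hu))
  have htop := weakStarOsc_ne_top hC
  have hδ := ENNReal.toReal_pos hne htop
  obtain ⟨p, x, hp, hx, hpx⟩ := exists_tendsto_zero_le_apply_of_weakStarOsc_minimal hδ
    (ENNReal.ofReal_toReal htop).symm hmin hC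
  have hnorm (n : ℕ) : (weakStarOsc w).toReal / 8 ≤ ‖(p n).comp (.id ℝ X)‖ :=
    (hpx n).trans ((le_abs_self _).trans (by simpa using (p n).le_of_opNorm_le_of_le le_rfl (hx n)))
  linarith [ge_of_tendsto' (hX p hp) hnorm]

theorem exists_isConvexBlock_tendsto (hX : IsLimitedOperator (.id ℝ X))
    {u : ℕ → StrongDual ℝ X} {C : ℝ} (hu : ∀ k, ‖u k‖ ≤ C) :
    ∃ w g, IsConvexBlock u w ∧ Tendsto w atTop (𝓝 g) := by
  obtain ⟨w, huw, hosc⟩ := exists_isConvexBlock_weakStarOsc_eq_zero hX hu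
  obtain ⟨g, hg⟩ := cauchySeq_tendsto_of_complete
    (hX.cauchySeq_comp (cauchySeq_apply_of_weakStarOsc_eq_zero hosc))
  exact ⟨w, g, huw, by simpa using hg⟩

end Limited

section Mazur

variable {X : Type*} [NormedAddCommGroup X] [NormedSpace ℝ X]

theorem exists_finset_forall_norm_le_two_mul_abs (F : Submodule ℝ (StrongDual ℝ X))
    [FiniteDimensional ℝ F] :
    ∃ s : Finset X, (∀ x ∈ s, ‖x‖ ≤ 1) ∧ ∀ f ∈ F, ∃ x ∈ s, ‖f‖ ≤ 2 * |f x| := by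
  classical
  have : ProperSpace F := FiniteDimensional.proper ℝ F
  have hopen (x : X) : IsOpen {f : F | 1 / 2 < |f.1 x|} :=
    isOpen_lt continuous_const (by fun_prop)
  obtain ⟨s, hs⟩ := (isCompact_sphere (0 : F) 1).elim_finite_subcover
    (fun x : closedBall (0 : X) 1 => {f : F | 1 / 2 < |f.1 x|}) (fun x => hopen x) fun f hf => by
      have hf_norm : 1 / 2 < ‖f.1‖ := one_half_lt_one.trans_eq (mem_sphere_zero_iff_norm.1 hf).symm
      obtain ⟨x, hx, hfx⟩ := f.1.exists_lt_apply_of_lt_opNorm hf_norm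
      exact Set.mem_iUnion.2 ⟨⟨x, by simpa using hx.le⟩, hfx⟩
  refine ⟨insert 0 (s.image (↑)), ?_, fun f hf => ?_⟩
  · simp +contextual
  · obtain rfl | hf0 := eq_or_ne f 0
    · exact ⟨0, by simp⟩
    have hnorm : 0 < ‖f‖ := norm_pos_iff.2 hf0
    have hunit : ‖‖f‖⁻¹ • f‖ = 1 := by simp [norm_smul, hnorm.ne']
    obtain ⟨x, hx, hfx⟩ := Set.mem_iUnion₂.1
      (hs (a := ⟨‖f‖⁻¹ • f, F.smul_mem _ hf⟩) (mem_sphere_zero_iff_norm.2 hunit))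
    refine ⟨x, Finset.mem_insert_of_mem (Finset.mem_image_of_mem _ hx), ?_⟩
    have : 1 / 2 < ‖f‖⁻¹ * |f x| := by simpa [abs_mul] using hfx
    rw [lt_inv_mul_iff₀ hnorm] at this
    linarith

theorem exists_norm_eq_one_forall_apply_eq_zero (hX : ¬ FiniteDimensional ℝ (StrongDual ℝ X))
    (s : Finset X) : ∃ f : StrongDual ℝ X, ‖f‖ = 1 ∧ ∀ x ∈ s, f x = 0 := by
  let eval : StrongDual ℝ X →ₗ[ℝ] s → ℝ :=
    LinearMap.pi fun x => (ContinuousLinearMap.apply ℝ ℝ (x : X)).toLinearMap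
  have hker : LinearMap.ker eval ≠ ⊥ := fun h =>
    hX (FiniteDimensional.of_injective eval (LinearMap.ker_eq_bot.1 h))
  obtain ⟨f, hf, hf0⟩ := Submodule.exists_mem_ne_zero_of_ne_bot hker
  refine ⟨‖f‖⁻¹ • f, by simp [norm_smul, hf0], fun x hx => ?_⟩
  have : f x = 0 := congrFun (LinearMap.mem_ker.1 hf) ⟨x, hx⟩
  simp [this]

-- As in Mazur's construction of basic sequences, each new functional vanishes on finite sets that
-- norm the spans of the functionals already chosen.
theorem exists_seq_norm_eq_one_and_norming (hX : ¬ FiniteDimensional ℝ (StrongDual ℝ X)) :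
    ∃ (f : ℕ → StrongDual ℝ X) (D : Set X), (∀ n, ‖f n‖ = 1) ∧
      (∀ x ∈ D, ‖x‖ ≤ 1 ∧ ∀ᶠ n in atTop, f n x = 0) ∧
      ∀ g ∈ Submodule.span ℝ (Set.range f), ∃ x ∈ D, ‖g‖ ≤ 2 * |g x| := by
  classical
  choose s hs_ball hs_norming using fun t : Finset (StrongDual ℝ X) =>
    exists_finset_forall_norm_le_two_mul_abs (Submodule.span ℝ (t : Set (StrongDual ℝ X)))
  choose next hnext hnext_zero using fun t : Finset (StrongDual ℝ X) =>
    exists_norm_eq_one_forall_apply_eq_zero hX (t.powerset.biUnion s)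
  let t (n : ℕ) : Finset (StrongDual ℝ X) := Nat.rec ∅ (fun _ t => insert (next t) t) n
  have ht_mono : Monotone t := monotone_nat_of_le_succ fun n => Finset.subset_insert _ _
  have ht_mem (n : ℕ) : next (t n) ∈ t (n + 1) := Finset.mem_insert_self _ _
  refine ⟨fun n => next (t n), {x | ∃ T : Finset (StrongDual ℝ X),
    ↑T ⊆ Set.range (fun n => next (t n)) ∧ x ∈ s T}, fun n => hnext _, ?_, fun g hg => ?_⟩
  · rintro x ⟨T, hT, hx⟩
    refine ⟨hs_ball T x hx, ?_⟩
    have hTt : ∀ᶠ n in atTop, ∀ f ∈ T, f ∈ t n := (eventually_all_finset T).2 fun f hf => by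
      obtain ⟨m, rfl⟩ := hT hf
      exact (eventually_ge_atTop (m + 1)).mono fun n hn => ht_mono hn (ht_mem m)
    filter_upwards [hTt] with n hn
    exact hnext_zero (t n) x (Finset.mem_biUnion.2 ⟨T, Finset.mem_powerset.2 hn, hx⟩)
  · obtain ⟨T, hT, hgT⟩ := Submodule.mem_span_finite_of_mem_span hg
    obtain ⟨x, hx, hgx⟩ := hs_norming T g hgT
    exact ⟨x, ⟨T, hT, hx⟩, hgx⟩

theorem eq_zero_of_mem_closure_of_norming {F : Set (StrongDual ℝ X)} {D : Set X}
    (hF : ∀ f ∈ F, ∃ x ∈ D, ‖f‖ ≤ 2 * |f x|) (hD : ∀ x ∈ D, ‖x‖ ≤ 1) {g : StrongDual ℝ X}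
    (hg : g ∈ closure F) (hgD : ∀ x ∈ D, g x = 0) : g = 0 := by
  refine norm_le_zero_iff.1 (le_of_forall_pos_le_add fun ε hε => ?_)
  obtain ⟨f, hfF, hgf⟩ := Metric.mem_closure_iff.1 hg (ε / 3) (by positivity)
  obtain ⟨x, hx, hfx⟩ := hF f hfF
  have hfx' : |f x| ≤ dist g f := by
    simpa [hgD x hx, dist_eq_norm] using (g - f).le_of_opNorm_le_of_le le_rfl (hD x hx)
  linarith [norm_le_norm_add_norm_sub' g f, dist_eq_norm g f, norm_sub_rev g f]

theorem tendsto_of_forall_exists_isConvexBlock {a : ℕ → ℝ} {l : ℝ}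
    (h : ∀ φ : ℕ → ℕ, StrictMono φ → ∃ b, IsConvexBlock (a ∘ φ) b ∧ Tendsto b atTop (𝓝 l)) :
    Tendsto a atTop (𝓝 l) := by
  refine tendsto_order.2 ⟨fun c hc => ?_, fun c hc => ?_⟩ <;> by_contra hfreq
  · obtain ⟨φ, hφ, hφc⟩ := extraction_of_frequently_atTop (not_eventually.1 hfreq)
    obtain ⟨b, hb, hbl⟩ := h φ hφ
    have := hb.eventually_mem (convex_Iic c) (.of_forall fun n => not_lt.1 (hφc n))
    exact hc.not_ge (le_of_tendsto hbl this)
  · obtain ⟨φ, hφ, hφc⟩ := extraction_of_frequently_atTop (not_eventually.1 hfreq)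
    obtain ⟨b, hb, hbl⟩ := h φ hφ
    have := hb.eventually_mem (convex_Ici c) (.of_forall fun n => not_lt.1 (hφc n))
    exact hc.not_ge (ge_of_tendsto hbl this)

theorem IsLimitedOperator.finiteDimensional_strongDual (hX : IsLimitedOperator (.id ℝ X)) :
    FiniteDimensional ℝ (StrongDual ℝ X) := by
  by_contra hdim
  obtain ⟨f, D, hf, hD, hnorming⟩ := exists_seq_norm_eq_one_and_norming hdim
  have hblock (φ : ℕ → ℕ) (hφ : StrictMono φ) :
      ∃ w, IsConvexBlock (f ∘ φ) w ∧ Tendsto w atTop (𝓝 0) := by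
    obtain ⟨w, g, hw, hwg⟩ := exists_isConvexBlock_tendsto hX fun k => (hf (φ k)).le
    have hspan : ∀ᶠ k in atTop, w k ∈ (Submodule.span ℝ (Set.range f) : Set (StrongDual ℝ X)) :=
      hw.eventually_mem (Submodule.convex _)
        (.of_forall fun k => Submodule.subset_span (Set.mem_range_self (φ k)))
    have hgD (x : X) (hx : x ∈ D) : g x = 0 := by
      have hfx : Tendsto (fun k => f (φ k) x) atTop (𝓝 0) := tendsto_const_nhds.congr'
        ((hφ.tendsto_atTop.eventually (hD x hx).2).mono fun _ => Eq.symm)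
      exact tendsto_nhds_unique (((ContinuousLinearMap.apply ℝ ℝ x).continuous.tendsto g).comp hwg)
        ((hw.apply x).tendsto hfx)
    have hg : g = 0 := eq_zero_of_mem_closure_of_norming hnorming (fun x hx => (hD x hx).1)
      (mem_closure_of_tendsto hwg hspan) hgD
    exact ⟨w, hw, hg ▸ hwg⟩
  have hf_null (x : X) : Tendsto (fun n => f n x) atTop (𝓝 0) :=
    tendsto_of_forall_exists_isConvexBlock fun φ hφ => by
      obtain ⟨w, hw, hw0⟩ := hblock φ hφ
      exact ⟨_, hw.apply x, by
        simpa [Function.comp_def] using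
          ((ContinuousLinearMap.apply ℝ ℝ x).continuous.tendsto 0).comp hw0⟩
  simpa [hf] using hX f hf_null

theorem finiteDimensional_of_isLimitedOperator_id (hX : IsLimitedOperator (.id ℝ X)) :
    FiniteDimensional ℝ X := by
  have := hX.finiteDimensional_strongDual
  have : FiniteDimensional ℝ (StrongDual ℝ (StrongDual ℝ X)) := inferInstance
  exact .of_injective (NormedSpace.inclusionInDoubleDualLi ℝ (E := X)).toLinearMap
    (NormedSpace.inclusionInDoubleDualLi ℝ).injective

end Mazur

section Transfer

variable {X Y E : Type*} [NormedAddCommGroup X] [NormedSpace ℝ X]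
  [NormedAddCommGroup Y] [NormedSpace ℝ Y] [NormedAddCommGroup E] [NormedSpace ℝ E]

theorem exists_forall_apply_sub_le_add {φ : X → ℝ} (hφ : ConvexOn ℝ Set.univ φ)
    (hφ_lsc : LowerSemicontinuous φ) (x₀ : X) {ε : ℝ} (hε : 0 < ε) :
    ∃ p : StrongDual ℝ X, ∀ x, p (x - x₀) ≤ φ x - φ x₀ + ε := by
  obtain ⟨p, c, hp, hpc⟩ := hφ.exists_affine_le_of_lt (𝕜 := ℝ) (Set.mem_univ x₀)
    (sub_lt_self (φ x₀) hε) isClosed_univ (hφ_lsc.lowerSemicontinuousOn _)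
  refine ⟨p, fun x => ?_⟩
  have hpx : p x + c ≤ φ x := hp ⟨x, Set.mem_univ x⟩
  have hpc : p x₀ + c = φ x₀ - ε := hpc
  rw [map_sub]
  linarith

theorem tendsto_apply_of_le_add_sub {g : X → ℝ} {x₀ : X} {L : StrongDual ℝ X}
    (hg : ∀ x, HasLineDerivAt ℝ g (L x) x₀ x) {a : ℕ → X → ℝ}
    (ha : ∀ x, Tendsto (fun n => a n x) atTop (𝓝 0)) {p : ℕ → StrongDual ℝ X}
    (hp : ∀ n x, p n x ≤ a n x + (g (x₀ + x) - g x₀)) (x : X) :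
    Tendsto (fun n => p n x) atTop (𝓝 (L x)) := by
  have upper (x : X) (c : ℝ) (hc : L x < c) : ∀ᶠ n in atTop, p n x < c := by
    obtain ⟨t, htc, ht⟩ := (((hg x).tendsto_slope_zero_right.eventually_lt_const hc).and
      self_mem_nhdsWithin).exists
    have ht : 0 < t := ht
    have hlim : Tendsto (fun n => t⁻¹ * (a n (t • x) + (g (x₀ + t • x) - g x₀))) atTop
        (𝓝 (t⁻¹ * (0 + (g (x₀ + t • x) - g x₀)))) :=
      ((ha (t • x)).add_const _).const_mul _
    filter_upwards [hlim.eventually_lt_const (by simpa using htc)] with n hn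
    calc p n x = t⁻¹ * p n (t • x) := by simp [ht.ne']
      _ ≤ t⁻¹ * (a n (t • x) + (g (x₀ + t • x) - g x₀)) :=
        mul_le_mul_of_nonneg_left (hp n _) (inv_nonneg.2 ht.le)
      _ < c := hn
  refine tendsto_order.2 ⟨fun c hc => ?_, upper x⟩
  filter_upwards [upper (-x) (-c) (by simpa using hc)] with n hn
  simpa using hn

theorem eventually_forall_mem_ball_abs_sub_le {f : Y → ℝ} {f' : StrongDual ℝ Y} {y₀ : Y}
    (hf : HasFDerivAt f f' y₀) {η : ℝ} (hη : 0 < η) :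
    ∀ᶠ t in 𝓝[>] (0 : ℝ), ∀ y ∈ ball y₀ t, |f y - f y₀ - f' (y - y₀)| ≤ η * t := by
  obtain ⟨r, hr, hball⟩ := Metric.eventually_nhds_iff_ball.1 (hf.isLittleO.def hη)
  filter_upwards [Ioo_mem_nhdsGT hr] with t ht y hy
  calc |f y - f y₀ - f' (y - y₀)| ≤ η * ‖y - y₀‖ := hball y (ball_subset_ball ht.2.le hy)
    _ ≤ η * t := by
      gcongr
      exact (mem_ball_iff_norm.1 hy).le

theorem norm_le_six_mul_of_forall_le_add {T : Y →L[ℝ] X} {q : X → E} {g : X → ℝ}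
    {e : StrongDual ℝ E} {p L : StrongDual ℝ X} {t η : ℝ} (ht : 0 < t)
    (hp : ∀ x, p x ≤ e (q x) + g x - g 0 + η * t) (hpL : ‖(p - L).comp T‖ ≤ η)
    (hg : ∀ y ∈ ball (0 : Y) t, |g (T y) - g 0 - L (T y)| ≤ η * t)
    (hsurj : ball (0 : E) t ⊆ (fun y => q (T y)) '' ball (0 : Y) t) :
    ‖e‖ ≤ 6 * η := by
  have hlower (v) (hv : v ∈ ball (0 : E) t) : -(3 * η * t) ≤ e v := by
    obtain ⟨y, hy, rfl⟩ := hsurj hv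
    have hpy : ‖(p - L) (T y)‖ ≤ η * t :=
      ((p - L).comp T).le_of_opNorm_le_of_le hpL (mem_ball_zero_iff.1 hy).le
    have hpy : -(η * t) ≤ p (T y) - L (T y) := (abs_le.1 hpy).1
    linarith [hp (T y), le_of_abs_le (hg y hy)]
  have hball (v) (hv : v ∈ closedBall (0 : E) (t / 2)) : ‖e v‖ ≤ 3 * η * t := by
    have hv : v ∈ ball (0 : E) t := closedBall_subset_ball (half_lt_self ht) hv
    have hneg := hlower (-v) (by simpa using hv)
    rw [map_neg] at hneg
    exact abs_le.2 ⟨hlower v hv, neg_le_neg_iff.1 hneg⟩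
  calc ‖e‖ ≤ 3 * η * t / (t / 2) :=
        ContinuousLinearMap.opNorm_bound_of_ball_bound (half_pos ht) _ _ hball
    _ = 6 * η := by field_simp; ring

theorem IsLimitedOperator.id_of_dc_cosurjective {T : Y →L[ℝ] X} (hT : IsLimitedOperator T)
    {q : X → E} {g : X → ℝ}
    (hdc : ∀ e : StrongDual ℝ E, ConvexOn ℝ Set.univ (fun x => e (q x) + g x) ∧
      LowerSemicontinuous fun x => e (q x) + g x)
    (hg : DifferentiableAt ℝ g 0) (hq : q 0 = 0)
    (hsurj : ∀ᶠ t in 𝓝[>] 0, ball (0 : E) t ⊆ (fun y => q (T y)) '' ball (0 : Y) t) :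
    IsLimitedOperator (.id ℝ E) := by
  intro e he
  simp only [ContinuousLinearMap.comp_id]
  obtain ⟨L, hL⟩ := hg
  choose p hp using fun n => exists_forall_apply_sub_le_add (hdc (e n)).1 (hdc (e n)).2 0
    (Nat.one_div_pos_of_nat (α := ℝ) (n := n))
  simp only [hq, map_zero, zero_add, sub_zero] at hp
  have hp_lim (x : X) : Tendsto (fun n => p n x) atTop (𝓝 (L x)) := by
    refine tendsto_apply_of_le_add_sub (fun x => hL.hasLineDerivAt x)
      (a := fun n x => e n (q x) + 1 / ((n : ℝ) + 1)) (fun x => ?_) (fun n x => ?_) x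
    · simpa using (he (q x)).add tendsto_one_div_add_atTop_nhds_zero_nat
    · rw [zero_add]
      linarith [hp n x]
  have hpT : Tendsto (fun n => ‖(p n - L).comp T‖) atTop (𝓝 0) :=
    hT _ fun x => by simpa using (hp_lim x).sub_const (L x)
  have hgT : HasFDerivAt (fun y => g (T y)) (L.comp T) 0 :=
    HasFDerivAt.comp (f := T) (g := g) 0 (by simpa using hL) T.hasFDerivAt
  refine tendsto_order.2 ⟨fun c hc => .of_forall fun n => hc.trans_le (norm_nonneg _),
    fun c hc => ?_⟩
  have hη : 0 < c / 8 := by positivity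
  obtain ⟨t, ⟨hgt, htsurj⟩, (ht : 0 < t)⟩ :=
    (((eventually_forall_mem_ball_abs_sub_le hgT hη).and hsurj).and self_mem_nhdsWithin).exists
  filter_upwards [hpT.eventually_le_const hη,
    tendsto_one_div_add_atTop_nhds_zero_nat.eventually_le_const (mul_pos hη ht)] with n hpn hn
  calc ‖e n‖ ≤ 6 * (c / 8) :=
        norm_le_six_mul_of_forall_le_add ht (fun x => (hp n x).trans (by gcongr)) hpn
          (by simpa using hgt) htsurj
    _ < c := by linarith

theorem finiteDimensional_of_limited_dc_cosurjective_general {T : Y →L[ℝ] X}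
    (hT : IsLimitedOperator T) {q : X → E} {g : X → ℝ}
    (hdc : ∀ e : StrongDual ℝ E, ConvexOn ℝ Set.univ (fun x => e (q x) + g x) ∧
      LowerSemicontinuous fun x => e (q x) + g x)
    (hg : DifferentiableAt ℝ g 0) (hq : q 0 = 0)
    (hsurj : ∀ᶠ t in 𝓝[>] 0, ball (0 : E) t ⊆ (fun y => q (T y)) '' ball (0 : Y) t) :
    FiniteDimensional ℝ E :=
  finiteDimensional_of_isLimitedOperator_id (hT.id_of_dc_cosurjective hdc hg hq hsurj)

end Transfer

/-- **extension of the Bourgain–Diestel theorem.** Let `T : Y → X` be a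
limited bounded linear operator between Banach spaces (every weak-* null sequence in `X*`
composed with `T` tends to `0` in norm). Suppose `q : X → E` is a d.c. mapping with a
control function `g` Fréchet differentiable at `0`, `q 0 = 0`, and
`B_E(0, t) ⊆ (q ∘ T)(B_Y(0, t))` for all `t > 0`. Then `E` is finite dimensional. -/
theorem finiteDimensional_of_limited_dc_cosurjective
    {X Y E : Type*} [NormedAddCommGroup X] [NormedSpace ℝ X] [CompleteSpace X]
    [NormedAddCommGroup Y] [NormedSpace ℝ Y] [CompleteSpace Y]
    [NormedAddCommGroup E] [NormedSpace ℝ E] [CompleteSpace E]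
    (T : Y →L[ℝ] X)
    (hT : ∀ p : ℕ → X →L[ℝ] ℝ, (∀ x : X, Tendsto (fun n => p n x) atTop (𝓝 0)) →
      Tendsto (fun n => ‖(p n).comp T‖) atTop (𝓝 0))
    (q : X → E) (g : X → ℝ)
    (hg_convex : ConvexOn ℝ Set.univ g) (hg_cont : Continuous g)
    (hdc : ∀ e : E →L[ℝ] ℝ, ConvexOn ℝ Set.univ (fun x => e (q x) + g x) ∧
      Continuous fun x => e (q x) + g x)
    (hg_frechet : DifferentiableAt ℝ g 0)
    (hq0 : q 0 = 0)
    (hsurj : ∀ t : ℝ, 0 < t → ball (0 : E) t ⊆ (fun y => q (T y)) '' ball (0 : Y) t) :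
    FiniteDimensional ℝ E := by
  exact finiteDimensional_of_limited_dc_cosurjective_general hT
    (fun e => ⟨(hdc e).1, (hdc e).2.lowerSemicontinuous⟩) hg_frechet hq0
    (eventually_mem_nhdsWithin.mono hsurj)
end
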